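/- arXiv:2504.15142 — 3 statements merged into one kernel-verified Lean document; each statement's English description precedes it below -/
import Mathlib

section
/- Let n > 1 be an odd integer. There exists a positive integer s such that a (K_2,K_{1,n})-URD(v;1,s) exists if and only if v ≡ 2(n+1) (mod n(n+1)). -/
/-- The edge set of the star with center `p.1` and leaf set `p.2`. -/
def starEdgeSet {V : Type*} [DecidableEq V] (p : V × Finset V) : Finset (Sym2 V) :=
  p.2.image (fun l => s(p.1, l))

/-- `P` is a family of vertex-disjoint `n`-stars (each given by a center and a set of
`n` leaves) whose vertex sets partition the whole vertex set. -/
def IsStarFactorFamily {V : Type*} [Fintype V] [DecidableEq V] (n : ℕ)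
    (P : Finset (V × Finset V)) : Prop :=
  (∀ p ∈ P, p.2.card = n ∧ p.1 ∉ p.2) ∧
  (∀ x : V, ∃! p, p ∈ P ∧ (x = p.1 ∨ x ∈ p.2))

/-- `E` is the edge set of a `K_{1,n}`-factor of the complete graph on `V`. -/
def IsStarFactor {V : Type*} [Fintype V] [DecidableEq V] (n : ℕ)
    (E : Finset (Sym2 V)) : Prop :=
  ∃ P : Finset (V × Finset V), IsStarFactorFamily n P ∧ E = P.biUnion starEdgeSet

/-- `E` is the edge set of a perfect matching (a `1`-factor, i.e. a `K_2`-factor). -/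
def IsOneFactor {V : Type*} [Fintype V] [DecidableEq V] (E : Finset (Sym2 V)) : Prop :=
  (∀ e ∈ E, ¬ e.IsDiag) ∧ ∀ x : V, ∃! e, e ∈ E ∧ x ∈ e

/-- A `(K_2, K_{1,n})`-URD`(v; r, s)`: a partition of the edge set of the complete graph
`K_v` into `r` classes that are `1`-factors and `s` classes that are `K_{1,n}`-factors. -/
def IsURD (n v r s : ℕ) : Prop :=
  ∃ (M : Fin r → Finset (Sym2 (Fin v))) (F : Fin s → Finset (Sym2 (Fin v))),
    (∀ i, IsOneFactor (M i)) ∧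
    (∀ j, IsStarFactor n (F j)) ∧
    (∀ i j, i ≠ j → Disjoint (M i) (M j)) ∧
    (∀ i j, i ≠ j → Disjoint (F i) (F j)) ∧
    (∀ i j, Disjoint (M i) (F j)) ∧
    (∀ e : Sym2 (Fin v),
      (e ∈ Finset.univ.biUnion M ∪ Finset.univ.biUnion F) ↔ ¬ e.IsDiag)

theorem konig {α β : Type} [Fintype α] [Fintype β] (d : ℕ) :
    ∀ (E : α → β → Prop),
    (∀ x, {y | E x y}.ncard = d) → (∀ y, {x | E x y}.ncard = d) →
    ∃ f : α → β → ℕ, (∀ x y, E x y → f x y < d) ∧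
      (∀ x, ∀ i < d, ∃! y, E x y ∧ f x y = i) ∧
      (∀ y, ∀ i < d, ∃! x, E x y ∧ f x y = i) := by
  classical
  induction d with
  | zero =>
    intro E h1 h2
    refine ⟨fun _ _ => 0, ?_, ?_, ?_⟩
    · intro x y h
      have := h1 x
      rw [Set.ncard_eq_zero] at this
      have h' : y ∈ {y | E x y} := h
      rw [this] at h'
      exact h'.elim
    · intro x i hi; omega
    · intro x i hi; omega
  | succ d ih =>
    intro E h1 h2
    have hc1 : ∀ x, (Finset.univ.filter (fun y => E x y)).card = d + 1 := by
      intro x; rw [← h1 x, Set.ncard_eq_toFinset_card']; congr 1; ext; simp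
    have hc2 : ∀ y, (Finset.univ.filter (fun x => E x y)).card = d + 1 := by
      intro x; rw [← h2 x, Set.ncard_eq_toFinset_card']; congr 1; ext; simp
    have hcard : Fintype.card α = Fintype.card β := by
      have := Finset.card_mul_eq_card_mul (s := Finset.univ) (t := Finset.univ) E
        (m := d + 1) (n := d + 1) (fun x _ => hc1 x) (fun x _ => hc2 x)
      simpa using this
    obtain ⟨m, hmi, hm⟩ := (Finset.all_card_le_biUnion_card_iff_exists_injective
      (fun x => Finset.univ.filter (fun y => E x y))).1 (by
        intro s
        have := Finset.card_mul_le_card_mul (s := s)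
          (t := s.biUnion (fun x => Finset.univ.filter (fun y => E x y))) E
          (m := d + 1) (n := d + 1) ?_ ?_
        · exact Nat.le_of_mul_le_mul_right this (by omega)
        · intro x hx
          rw [← hc1 x]
          apply Finset.card_le_card
          intro y hy
          simp only [Finset.mem_filter, Finset.mem_univ, true_and] at hy
          simp only [Finset.bipartiteAbove, Finset.mem_filter, Finset.mem_biUnion, Finset.mem_univ, true_and]
          exact ⟨⟨x, hx, hy⟩, hy⟩
        · intro y hy
          rw [← hc2 y]
          apply Finset.card_le_card
          intro x hx
          simp only [Finset.bipartiteBelow, Finset.mem_filter] at hx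
          simpa using hx.2)
    have hmb : Function.Bijective m :=
      (Fintype.bijective_iff_injective_and_card m).2 ⟨hmi, hcard⟩
    have hm' : ∀ x, E x (m x) := fun x => by simpa using hm x
    obtain ⟨f, hf1, hf2, hf3⟩ := ih (fun x y => E x y ∧ y ≠ m x) (by
        intro x
        have : {y | E x y ∧ y ≠ m x} = {y | E x y} \ {m x} := by ext; simp
        rw [this, Set.ncard_sdiff_singleton_of_mem (show m x ∈ {y | E x y} from hm' x), h1]; rfl) (by
        intro y
        obtain ⟨x₀, rfl⟩ := hmb.2 y
        have : {x | E x (m x₀) ∧ m x₀ ≠ m x} = {x | E x (m x₀)} \ {x₀} := by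
          ext x; simp [hmi.eq_iff, eq_comm]
        rw [this, Set.ncard_sdiff_singleton_of_mem (show x₀ ∈ {x | E x (m x₀)} from hm' x₀), h2]; rfl)
    refine ⟨fun x y => if y = m x then d else f x y, ?_, ?_, ?_⟩
    · intro x y h
      dsimp only
      split_ifs with h'
      · omega
      · have := hf1 x y ⟨h, h'⟩; omega
    · intro x i hi
      by_cases hid : i = d
      · refine ⟨m x, ⟨hm' x, by simp [hid]⟩, ?_⟩
        rintro y ⟨h, h'⟩
        by_contra hne
        have := hf1 x y ⟨h, hne⟩
        simp [hne] at h'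
        omega
      · obtain ⟨y, ⟨⟨hy, hy'⟩, hy2⟩, hu⟩ := hf2 x i (by omega)
        refine ⟨y, ⟨hy, by simp [hy', hy2]⟩, ?_⟩
        rintro z ⟨h, h'⟩
        by_cases hz : z = m x
        · simp [hz] at h'; omega
        · simp [hz] at h'
          exact hu z ⟨⟨h, hz⟩, h'⟩
    · intro y i hi
      by_cases hid : i = d
      · obtain ⟨x₀, rfl⟩ := hmb.2 y
        refine ⟨x₀, ⟨hm' x₀, by simp [hid]⟩, ?_⟩
        rintro x ⟨h, h'⟩
        by_contra hne
        have hne' : ¬ m x₀ = m x := fun h => hne (hmi h).symm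
        have := hf1 x _ ⟨h, hne'⟩
        simp [hne'] at h'
        omega
      · obtain ⟨x, ⟨⟨hy, hy'⟩, hy2⟩, hu⟩ := hf3 y i (by omega)
        refine ⟨x, ⟨hy, by simp [hy', hy2]⟩, ?_⟩
        rintro z ⟨h, h'⟩
        by_cases hz : y = m z
        · simp [hz] at h'; omega
        · simp [hz] at h'
          exact hu z ⟨⟨h, hz⟩, h'⟩

theorem kappa {V : Type} [Fintype V] {m : ℕ} (γ : V → Fin m) (R : V → V → Prop)
    (hs : ∀ x y, R x y → R y x) (d : ℕ)
    (hd : ∀ x a, a ≠ γ x → {y | R x y ∧ γ y = a}.ncard = d) :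
    ∃ κ : V → V → ℕ, (∀ x y, γ x ≠ γ y → κ x y = κ y x) ∧
      (∀ x y, γ x ≠ γ y → R x y → κ x y < d) ∧
      (∀ x b, b ≠ γ x → ∀ i < d, ∃! y, R x y ∧ γ y = b ∧ κ x y = i) := by
  classical
  have key : ∀ a b : Fin m, ∃ f : V → V → ℕ, a ≠ b →
      (∀ x y, γ x = a → γ y = b → R x y → f x y < d) ∧
      (∀ x, γ x = a → ∀ i < d, ∃! y, R x y ∧ γ y = b ∧ f x y = i) ∧
      (∀ y, γ y = b → ∀ i < d, ∃! x, R y x ∧ γ x = a ∧ f x y = i) := by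
    intro a b
    by_cases hab : a = b
    · exact ⟨fun _ _ => 0, fun h => (h hab).elim⟩
    obtain ⟨f, h1, h2, h3⟩ := konig (α := {x // γ x = a}) (β := {x // γ x = b}) d
      (fun x y => R x.1 y.1) (by
        rintro ⟨x, hx⟩
        rw [← hd x b (by rw [hx]; exact fun h => hab h.symm),
          ← Set.ncard_image_of_injective _ Subtype.val_injective]
        congr 1
        ext y
        simp [and_comm]) (by
        rintro ⟨x, hx⟩
        rw [← hd x a (by rw [hx]; exact hab),
          ← Set.ncard_image_of_injective _ Subtype.val_injective]
        congr 1
        ext y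
        simp only [Set.mem_image, Set.mem_ofPred_eq, Subtype.exists, exists_and_right, exists_eq_right]
        constructor
        · rintro ⟨h, h'⟩; exact ⟨hs _ _ h', h⟩
        · rintro ⟨h, h'⟩; exact ⟨h', hs _ _ h⟩)
    refine ⟨fun x y => if h : γ x = a ∧ γ y = b then f ⟨x, h.1⟩ ⟨y, h.2⟩ else 0, fun _ => ⟨?_, ?_, ?_⟩⟩
    · intro x y hx hy hR
      simp only [hx, hy, and_self, dite_true]
      exact h1 ⟨x, hx⟩ ⟨y, hy⟩ hR
    · intro x hx i hi
      obtain ⟨⟨y, hy⟩, ⟨hR, hf⟩, hu⟩ := h2 ⟨x, hx⟩ i hi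
      refine ⟨y, ⟨hR, hy, by simpa [hx, hy] using hf⟩, ?_⟩
      rintro z ⟨hz, hz', hz''⟩
      have := hu ⟨z, hz'⟩ ⟨hz, by simpa [hx, hz'] using hz''⟩
      exact congrArg Subtype.val this
    · intro y hy i hi
      obtain ⟨⟨x, hx⟩, ⟨hR, hf⟩, hu⟩ := h3 ⟨y, hy⟩ i hi
      refine ⟨x, ⟨hs _ _ hR, hx, by simpa [hx, hy] using hf⟩, ?_⟩
      rintro z ⟨hz, hz', hz''⟩
      have := hu ⟨z, hz'⟩ ⟨hs _ _ hz, by simpa [hy, hz'] using hz''⟩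
      exact congrArg Subtype.val this
  choose f hf using key
  refine ⟨fun x y => if γ x < γ y then f (γ x) (γ y) x y else f (γ y) (γ x) y x, ?_, ?_, ?_⟩
  · intro x y h
    dsimp only
    rcases lt_or_gt_of_ne h with h | h
    · rw [if_pos h, if_neg (lt_asymm h)]
    · rw [if_pos h, if_neg (lt_asymm h)]
  · intro x y h hR
    dsimp only
    split_ifs with h'
    · exact (hf _ _ h).1 x y rfl rfl hR
    · exact (hf _ _ h.symm).1 y x rfl rfl (hs _ _ hR)
  · intro x b hb i hi
    rcases lt_or_gt_of_ne hb with h | h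
    · obtain ⟨y, ⟨h1, h2, h3⟩, hu⟩ := (hf b (γ x) hb).2.2 x rfl i hi
      refine ⟨y, ⟨h1, h2, ?_⟩, ?_⟩
      · dsimp only; rw [h2, if_neg (lt_asymm h)]; exact h3
      · rintro z ⟨hz, rfl, hz'⟩
        dsimp only at hz'; rw [if_neg (lt_asymm h)] at hz'
        exact hu z ⟨hz, rfl, hz'⟩
    · obtain ⟨y, ⟨h1, h2, h3⟩, hu⟩ := (hf (γ x) b hb.symm).2.1 x rfl i hi
      refine ⟨y, ⟨h1, h2, ?_⟩, ?_⟩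
      · dsimp only; rw [h2, if_pos h]; exact h3
      · rintro z ⟨hz, rfl, hz'⟩
        dsimp only at hz'; rw [if_pos h] at hz'
        exact hu z ⟨hz, rfl, hz'⟩

def HasCol (n : ℕ) (V : Type) : Prop :=
  ∃ (J : Type) (_ : Fintype J) (γ : J → V → Fin (n + 1)) (col : V → V → Option J) (q : J → ℕ),
    (∀ x y, col x y = col y x) ∧
    (∀ x, ∃! y, y ≠ x ∧ col x y = none) ∧
    (∀ x y j, x ≠ y → col x y = some j → γ j x ≠ γ j y) ∧
    (∀ j x a, a ≠ γ j x → {y | col x y = some j ∧ γ j y = a}.ncard = 2 * q j)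

theorem HasCol.congr {n : ℕ} {V W : Type} (e : W ≃ V) (h : HasCol n V) : HasCol n W := by
  obtain ⟨J, iJ, γ, col, q, h1, h2, h3, h4⟩ := h
  refine ⟨J, iJ, fun j x => γ j (e x), fun x y => col (e x) (e y), q, fun x y => h1 _ _, ?_, ?_, ?_⟩
  · intro x
    obtain ⟨y, ⟨hy, hy'⟩, hu⟩ := h2 (e x)
    refine ⟨e.symm y, ⟨?_, by simpa using hy'⟩, ?_⟩
    · rintro rfl; simp at hy
    · rintro z ⟨hz, hz'⟩
      rw [← hu (e z) ⟨by simpa using hz, hz'⟩]; simp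
  · intro x y j hxy; exact h3 _ _ j (by simpa using hxy)
  · intro j x a ha
    rw [← h4 j (e x) a ha, ← Set.ncard_image_of_injective _ e.injective]
    congr 1
    ext y
    simp only [Set.mem_image, Set.mem_ofPred_eq]
    constructor
    · rintro ⟨z, hz, rfl⟩; exact hz
    · intro hz; exact ⟨e.symm y, by simpa using hz, by simp⟩

theorem starFactor_of {V : Type} [Fintype V] [DecidableEq V] {n : ℕ} (L : V → V → Prop)
    (γ : V → Fin (n + 1)) (a : Fin (n + 1))
    (h0 : ∀ x y, L x y → γ x = a ∧ γ y ≠ a)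
    (h1 : ∀ x, γ x = a → ∀ b, b ≠ a → ∃! y, L x y ∧ γ y = b)
    (h2 : ∀ y, γ y ≠ a → ∃! x, L x y) (E : Finset (Sym2 V))
    (hE : ∀ x y, s(x, y) ∈ E ↔ L x y ∨ L y x) : IsStarFactor n E := by
  classical
  refine ⟨(Finset.univ.filter (fun x => γ x = a)).image
    (fun x => (x, Finset.univ.filter (fun y => L x y))), ⟨?_, ?_⟩, ?_⟩
  · intro p hp
    simp only [Finset.mem_image, Finset.mem_filter, Finset.mem_univ, true_and] at hp
    obtain ⟨x, hx, rfl⟩ := hp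
    constructor
    · have : n = (Finset.univ.erase a).card := by simp
      conv_rhs => rw [this]
      apply Finset.card_bij (fun y _ => γ y)
      · intro y hy
        simp only [Finset.mem_filter, Finset.mem_univ, true_and] at hy
        simpa using (h0 _ _ hy).2
      · intro y hy z hz hyz
        simp only [Finset.mem_filter, Finset.mem_univ, true_and] at hy hz
        exact (h1 x hx _ (h0 _ _ hy).2).unique ⟨hy, rfl⟩ ⟨hz, hyz.symm⟩
      · intro b hb
        obtain ⟨y, ⟨hy, hy'⟩, -⟩ := h1 x hx b (by simpa using hb)
        exact ⟨y, by simpa using hy, hy'⟩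
    · simp only [Finset.mem_filter, Finset.mem_univ, true_and]
      intro h
      exact (h0 _ _ h).2 hx
  · intro y
    by_cases hy : γ y = a
    · refine ⟨(y, Finset.univ.filter (fun z => L y z)), ⟨?_, Or.inl rfl⟩, ?_⟩
      · simp only [Finset.mem_image, Finset.mem_filter, Finset.mem_univ, true_and]
        exact ⟨y, hy, rfl⟩
      · rintro p ⟨hp, hp'⟩
        simp only [Finset.mem_image, Finset.mem_filter, Finset.mem_univ, true_and] at hp
        obtain ⟨x, hx, rfl⟩ := hp
        rcases hp' with hp' | hp'
        · dsimp only at hp'; subst hp'; rfl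
        · simp only [Finset.mem_filter, Finset.mem_univ, true_and] at hp'
          exact ((h0 _ _ hp').2 hy).elim
    · obtain ⟨x, hx, hu⟩ := h2 y hy
      refine ⟨(x, Finset.univ.filter (fun z => L x z)), ⟨?_, Or.inr (by simpa using hx)⟩, ?_⟩
      · simp only [Finset.mem_image, Finset.mem_filter, Finset.mem_univ, true_and]
        exact ⟨x, (h0 _ _ hx).1, rfl⟩
      · rintro p ⟨hp, hp'⟩
        simp only [Finset.mem_image, Finset.mem_filter, Finset.mem_univ, true_and] at hp
        obtain ⟨z, hz, rfl⟩ := hp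
        rcases hp' with hp' | hp'
        · dsimp only at hp'; subst hp'; exact (hy hz).elim
        · simp only [Finset.mem_filter, Finset.mem_univ, true_and] at hp'
          rw [hu z hp']
  · ext e
    induction e using Sym2.ind with
    | _ x y =>
    rw [hE]
    simp only [Finset.mem_biUnion, Finset.mem_image, Finset.mem_filter, Finset.mem_univ, true_and,
      starEdgeSet]
    constructor
    · rintro (h | h)
      · exact ⟨_, ⟨x, (h0 _ _ h).1, rfl⟩, y, by simpa using h, rfl⟩
      · exact ⟨_, ⟨y, (h0 _ _ h).1, rfl⟩, x, by simpa using h, Sym2.eq_swap⟩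
    · rintro ⟨_, ⟨z, hz, rfl⟩, w, hw, h⟩
      simp only [Finset.mem_filter, Finset.mem_univ, true_and] at hw
      rw [Sym2.eq_iff] at h
      rcases h with ⟨rfl, rfl⟩ | ⟨rfl, rfl⟩
      · exact Or.inl hw
      · exact Or.inr hw

theorem HasCol.urd {n v : ℕ} (h : HasCol n (Fin v)) : ∃ s, IsURD n v 1 s := by
  classical
  obtain ⟨J, iJ, γ, col, q, hsym, hmat, hne, hct⟩ := h
  have hk : ∀ j, _ := fun j => kappa (γ j) (fun x y => col x y = some j)
    (fun x y h => by rw [hsym]; exact h) (2 * q j) (hct j)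
  choose κ hκs hκl hκu using hk
  let T := Σ j : J, Fin (q j) × Fin (n + 1)
  let L : T → Fin v → Fin v → Prop := fun t x y =>
    γ t.1 x = t.2.2 ∧ γ t.1 y ≠ t.2.2 ∧ col x y = some t.1 ∧
      κ t.1 x y = if t.2.2 < γ t.1 y then (t.2.1 : ℕ) else q t.1 + t.2.1
  let Fs : T → Finset (Sym2 (Fin v)) := fun t =>
    Finset.univ.filter (fun e => ∃ x y, e = s(x, y) ∧ L t x y)
  let M : Finset (Sym2 (Fin v)) :=
    Finset.univ.filter (fun e => ∃ x y, e = s(x, y) ∧ x ≠ y ∧ col x y = none)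
  have hFs : ∀ t x y, s(x, y) ∈ Fs t ↔ L t x y ∨ L t y x := by
    intro t x y
    simp only [Fs, Finset.mem_filter, Finset.mem_univ, true_and]
    constructor
    · rintro ⟨z, w, h, hL⟩
      rw [Sym2.eq_iff] at h
      rcases h with ⟨rfl, rfl⟩ | ⟨rfl, rfl⟩
      · exact Or.inl hL
      · exact Or.inr hL
    · rintro (h | h)
      · exact ⟨x, y, rfl, h⟩
      · exact ⟨y, x, Sym2.eq_swap, h⟩
  have hM : ∀ x y, s(x, y) ∈ M ↔ x ≠ y ∧ col x y = none := by
    intro x y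
    simp only [M, Finset.mem_filter, Finset.mem_univ, true_and]
    constructor
    · rintro ⟨z, w, h, hL⟩
      rw [Sym2.eq_iff] at h
      rcases h with ⟨rfl, rfl⟩ | ⟨rfl, rfl⟩
      · exact hL
      · exact ⟨hL.1.symm, by rw [hsym]; exact hL.2⟩
    · intro h; exact ⟨x, y, rfl, h⟩
  have hcolL : ∀ t x y, s(x, y) ∈ Fs t → col x y = some t.1 ∧ γ t.1 x ≠ γ t.1 y := by
    intro t x y h
    rw [hFs] at h
    rcases h with h | h
    · exact ⟨h.2.2.1, by rw [h.1]; exact h.2.1.symm⟩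
    · exact ⟨by rw [hsym]; exact h.2.2.1, by rw [h.1]; exact h.2.1⟩
  have hone : ∀ t t' x y, L t x y → L t' y x → False := by
    rintro ⟨j, i, a⟩ ⟨j', i', a'⟩ x y ⟨h1, h2, h3, h4⟩ ⟨h1', h2', h3', h4'⟩
    dsimp only at *
    rw [hsym, h3] at h3'
    obtain rfl : j = j' := by simpa using h3'
    have h := hκs j x y (by rw [h1]; exact h2.symm)
    rw [h4, h4', ← h1, ← h1'] at h
    have hi := i.2
    have hi' := i'.2
    rw [← h1] at h2
    rcases lt_or_gt_of_ne h2 with h5 | h5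
    · rw [if_neg (lt_asymm h5), if_pos h5] at h; omega
    · rw [if_neg (lt_asymm h5), if_pos h5] at h; omega
  have hone' : ∀ t t' x y, L t x y → L t' x y → t = t' := by
    rintro ⟨j, i, a⟩ ⟨j', i', a'⟩ x y ⟨h1, h2, h3, h4⟩ ⟨h1', h2', h3', h4'⟩
    dsimp only at *
    rw [h3] at h3'
    obtain rfl : j = j' := by simpa using h3'
    obtain rfl : a = a' := by rw [← h1, h1']
    rw [h4] at h4'
    have : i = i' := by
      ext
      split_ifs at h4' <;> omega
    rw [this]
  have hdisj : ∀ t t', t ≠ t' → Disjoint (Fs t) (Fs t') := by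
    intro t t' htt
    rw [Finset.disjoint_left]
    intro e
    induction e using Sym2.ind with
    | _ x y =>
    intro h h'
    rw [hFs] at h h'
    rcases h with h | h <;> rcases h' with h' | h'
    · exact htt (hone' _ _ _ _ h h')
    · exact hone _ _ _ _ h h'
    · exact hone _ _ _ _ h h'
    · exact htt (hone' _ _ _ _ h h')
  have hcov : ∀ x y j, x ≠ y → col x y = some j → ∃ t, s(x, y) ∈ Fs t := by
    have aux : ∀ x y j, col x y = some j → γ j x < γ j y → ∃ t, s(x, y) ∈ Fs t := by
      intro x y j hc hl
      have hlt := hκl j x y hl.ne hc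
      by_cases hq : κ j x y < q j
      · refine ⟨⟨j, ⟨_, hq⟩, γ j x⟩, (hFs _ _ _).2 (Or.inl ⟨rfl, hl.ne', hc, ?_⟩)⟩
        simp only
        rw [if_pos hl]
      · refine ⟨⟨j, ⟨κ j x y - q j, by omega⟩, γ j y⟩,
          (hFs _ _ _).2 (Or.inr ⟨rfl, hl.ne, by rw [hsym]; exact hc, ?_⟩)⟩
        simp only
        rw [if_neg (lt_asymm hl), ← hκs j x y hl.ne]
        omega
    intro x y j hxy hc
    rcases lt_or_gt_of_ne (hne x y j hxy hc) with h | h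
    · exact aux x y j hc h
    · rw [Sym2.eq_swap]; exact aux y x j (by rw [hsym]; exact hc) h
  refine ⟨Fintype.card T, fun _ => M, fun i => Fs ((Fintype.equivFin T).symm i), ?_, ?_, ?_, ?_, ?_, ?_⟩
  · intro _
    constructor
    · intro e
      induction e using Sym2.ind with
      | _ x y =>
      rw [hM]; intro h; simpa using h.1
    · intro x
      obtain ⟨y, ⟨hy, hy'⟩, hu⟩ := hmat x
      refine ⟨s(x, y), ⟨(hM _ _).2 ⟨hy.symm, hy'⟩, by simp⟩, ?_⟩
      rintro e ⟨he, hx⟩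
      obtain ⟨z, rfl⟩ := hx
      rw [hM] at he
      rw [hu z ⟨he.1.symm, he.2⟩]
  · intro i
    dsimp only
    generalize (Fintype.equivFin T).symm i = t
    have hlt : ∀ b, (if t.2.2 < b then (t.2.1 : ℕ) else q t.1 + t.2.1) < 2 * q t.1 := by
      intro b
      have := t.2.1.2
      split_ifs <;> omega
    refine starFactor_of (L t) (γ t.1) t.2.2
      (fun x y h => ⟨h.1, h.2.1⟩) ?_ ?_ _ (hFs t)
    · intro x hx b hb
      obtain ⟨y, ⟨h1, h2, h3⟩, hu⟩ := hκu t.1 x b (by rw [hx]; exact hb) _ (hlt b)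
      refine ⟨y, ⟨⟨hx, by rw [h2]; exact hb, h1, by rw [h2]; exact h3⟩, h2⟩, ?_⟩
      rintro z ⟨⟨_, _, hz1, hz2⟩, hz3⟩
      rw [hz3] at hz2
      exact hu z ⟨hz1, hz3, hz2⟩
    · intro y hy
      obtain ⟨x, ⟨h1, h2, h3⟩, hu⟩ := hκu t.1 y t.2.2 hy.symm _ (hlt (γ t.1 y))
      refine ⟨x, ⟨h2, hy, by rw [hsym]; exact h1, ?_⟩, ?_⟩
      · rw [hκs t.1 x y (by rw [h2]; exact hy.symm)]; exact h3
      · rintro z ⟨hz1, hz2, hz3, hz4⟩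
        refine hu z ⟨by rw [hsym]; exact hz3, hz1, ?_⟩
        rw [hκs t.1 y z (by rw [hz1]; exact hz2)]; exact hz4
  · intro i j h; exact (h (Subsingleton.elim _ _)).elim
  · intro i j h
    exact hdisj _ _ (by simpa using h)
  · intro _ j
    rw [Finset.disjoint_left]
    intro e
    induction e using Sym2.ind with
    | _ x y =>
    intro h h'
    rw [hM] at h
    have := (hcolL _ _ _ h').1
    rw [h.2] at this
    simp at this
  · intro e
    induction e using Sym2.ind with
    | _ x y =>
    simp only [Finset.mem_union, Finset.mem_biUnion, Finset.mem_univ, true_and, Sym2.mk_isDiag_iff]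
    constructor
    · rintro (⟨_, h⟩ | ⟨i, h⟩)
      · exact ((hM _ _).1 h).1
      · intro hxy; exact (hcolL _ _ _ h).2 (by rw [hxy])
    · intro hxy
      cases hc : col x y with
      | none => exact Or.inl ⟨0, (hM _ _).2 ⟨hxy, hc⟩⟩
      | some j =>
        obtain ⟨t, ht⟩ := hcov x y j hxy hc
        exact Or.inr ⟨Fintype.equivFin T t, by simpa using ht⟩

theorem IsStarFactor.count {V : Type} [Fintype V] [DecidableEq V] {n : ℕ} {E : Finset (Sym2 V)}
    (h : IsStarFactor n E) : E.card * (n + 1) = n * Fintype.card V ∧ (n + 1) ∣ Fintype.card V := by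
  obtain ⟨P, ⟨h1, h2⟩, rfl⟩ := h
  have huniq : ∀ p ∈ P, ∀ p' ∈ P, ∀ x, (x = p.1 ∨ x ∈ p.2) → (x = p'.1 ∨ x ∈ p'.2) → p = p' :=
    fun p hp p' hp' x hx hx' => (h2 x).unique ⟨hp, hx⟩ ⟨hp', hx'⟩
  have hV : P.card * (n + 1) = Fintype.card V := by
    have : (Finset.univ : Finset V) = P.biUnion (fun p => insert p.1 p.2) := by
      ext x
      obtain ⟨p, ⟨hp, hx⟩, -⟩ := h2 x
      simp only [Finset.mem_univ, Finset.mem_biUnion, true_iff, Finset.mem_insert]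
      exact ⟨p, hp, hx⟩
    rw [← Finset.card_univ, this, Finset.card_biUnion]
    · rw [Finset.sum_congr rfl (g := fun _ => n + 1)]
      · simp
      · intro p hp
        rw [Finset.card_insert_of_notMem (h1 p hp).2, (h1 p hp).1]
    · intro p hp p' hp' hne
      rw [Function.onFun, Finset.disjoint_left]
      intro x hx hx'
      exact hne (huniq p hp p' hp' x (by simpa using hx) (by simpa using hx'))
  have hE : (P.biUnion starEdgeSet).card = P.card * n := by
    rw [Finset.card_biUnion]
    · rw [Finset.sum_congr rfl (g := fun _ => n)]
      · simp
      · intro p hp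
        rw [starEdgeSet, Finset.card_image_of_injective, (h1 p hp).1]
        intro a b hab
        rw [Sym2.eq_iff] at hab
        rcases hab with ⟨_, h⟩ | ⟨h, h'⟩
        · exact h
        · exact h'.trans h
    · intro p hp p' hp' hne
      rw [Function.onFun, Finset.disjoint_left]
      intro e he he'
      simp only [starEdgeSet, Finset.mem_image] at he he'
      obtain ⟨l, hl, rfl⟩ := he
      obtain ⟨l', hl', h⟩ := he'
      rw [Sym2.eq_iff] at h
      refine hne (huniq p hp p' hp' p.1 (Or.inl rfl) ?_)
      rcases h with ⟨h, _⟩ | ⟨_, h⟩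
      · exact Or.inl h.symm
      · rw [← h]; exact Or.inr hl'
  refine ⟨?_, hV ▸ Dvd.intro_left _ rfl⟩
  rw [hE, ← hV]; ring

theorem IsOneFactor.count {V : Type} [Fintype V] [DecidableEq V] {E : Finset (Sym2 V)}
    (h : IsOneFactor E) : E.card * 2 = Fintype.card V := by
  obtain ⟨h1, h2⟩ := h
  have : (Finset.univ : Finset V) = E.biUnion (fun e => e.toFinset) := by
    ext x
    obtain ⟨p, ⟨hp, hx⟩, -⟩ := h2 x
    simp only [Finset.mem_univ, Finset.mem_biUnion, true_iff, Sym2.mem_toFinset]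
    exact ⟨p, hp, hx⟩
  rw [← Finset.card_univ, this, Finset.card_biUnion]
  · rw [Finset.sum_congr rfl (g := fun _ => 2)]
    · simp
    · intro p hp
      exact Sym2.card_toFinset_of_not_isDiag p (h1 p hp)
  · intro p hp p' hp' hne
    rw [Function.onFun, Finset.disjoint_left]
    intro x hx hx'
    rw [Sym2.mem_toFinset] at hx hx'
    exact hne ((h2 x).unique ⟨hp, hx⟩ ⟨hp', hx'⟩)

theorem IsURD.count {n v s : ℕ} (hv : 0 < v) (h : IsURD n v 1 s) :
    (n + 1) * v = (n + 1) * 2 + 2 * s * n ∧ (0 < s → (n + 1) ∣ v) := by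
  obtain ⟨M, F, h1, h2, h3, h4, h5, h6⟩ := h
  have hM := (h1 0).count
  have hF : ∀ j, (F j).card * (n + 1) = n * v := fun j => by simpa using (h2 j).count.1
  simp only [Fintype.card_fin] at hM
  have hU : (Finset.univ.filter (fun e : Sym2 (Fin v) => ¬ e.IsDiag)) =
      Finset.univ.biUnion M ∪ Finset.univ.biUnion F := by
    ext e
    rw [h6]; simp
  have hc : (Finset.univ.filter (fun e : Sym2 (Fin v) => ¬ e.IsDiag)).card = v.choose 2 := by
    rw [← Fintype.card_subtype, Sym2.card_subtype_not_diag, Fintype.card_fin]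
  have hd : Disjoint (Finset.univ.biUnion M) (Finset.univ.biUnion F) := by
    rw [Finset.disjoint_left]
    intro e he he'
    simp only [Finset.mem_biUnion, Finset.mem_univ, true_and] at he he'
    obtain ⟨i, hi⟩ := he
    obtain ⟨j, hj⟩ := he'
    exact Finset.disjoint_left.1 (h5 i j) hi hj
  rw [hU, Finset.card_union_of_disjoint hd, Finset.card_biUnion (fun i _ j _ h => h3 i j h),
    Finset.card_biUnion (fun i _ j _ h => h4 i j h)] at hc
  simp only [Finset.univ_unique, Fin.default_eq_zero, Finset.sum_singleton] at hc
  have hch : v.choose 2 * 2 = v * (v - 1) := by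
    rw [Nat.choose_two_right, Nat.div_mul_cancel (Nat.even_mul_pred_self v).two_dvd]
  have hsum : (∑ j, (F j).card) * (n + 1) = s * (n * v) := by
    rw [Finset.sum_mul, Finset.sum_congr rfl (fun j _ => hF j)]; simp
  constructor
  · obtain ⟨w, rfl⟩ : ∃ w, v = w + 1 := ⟨v - 1, by omega⟩
    simp only [Nat.add_sub_cancel] at hch
    have : (n + 1) * ((w + 1) * w) = (n + 1) * (w + 1) + 2 * (s * (n * (w + 1))) := by
      rw [← hch, ← hc, ← hsum]; linear_combination (n + 1) * hM
    have h' : (w + 1) * ((n + 1) * w) = (w + 1) * ((n + 1) + 2 * s * n) := by linarith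
    have := Nat.eq_of_mul_eq_mul_left hv h'
    linarith
  · intro hs
    simpa using (h2 ⟨0, hs⟩).count.2

theorem necessity {n v s : ℕ} (hv : 0 < v) (hs : 0 < s) (h : IsURD n v 1 s) :
    v ≡ 2 * (n + 1) [MOD n * (n + 1)] := by
  obtain ⟨h1, h2⟩ := h.count hv
  have h2 := h2 hs
  have hcop : Nat.Coprime n (n + 1) := by simp
  rw [← Nat.modEq_and_modEq_iff_modEq_mul hcop]
  constructor
  · have : (n + 1) * v ≡ (n + 1) * (2 * (n + 1)) [MOD n] := by
      rw [h1]
      have e1 : (n + 1) * 2 + 2 * s * n ≡ (n + 1) * 2 [MOD n] := by simp [Nat.ModEq]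
      refine e1.trans ?_
      apply Nat.ModEq.mul_left
      have : 2 * (n + 1) = 2 + 2 * n := by ring
      rw [this]
      simp [Nat.ModEq]
    exact Nat.ModEq.cancel_left_of_coprime hcop this
  · exact ((Nat.modEq_zero_iff_dvd).2 h2).trans ((Nat.modEq_zero_iff_dvd).2 (Dvd.intro_left _ rfl)).symm

def GoodF (n : ℕ) (F : ZMod n → Fin (n + 1) → Fin (n + 1)) : Prop :=
  (∀ t g, F t (F t g) = g) ∧ (∀ t g, F t g ≠ g) ∧ (∀ g t t', F t g = F t' g → t = t') ∧
    (∀ g a, a ≠ g → ∃ t, F t g = a)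

theorem exists_half {n : ℕ} (hodd : Odd n) : ∃ u : ZMod n, 2 * u = 1 := by
  obtain ⟨m, rfl⟩ := hodd
  refine ⟨((m + 1 : ℕ) : ZMod (2 * m + 1)), ?_⟩
  have : ((2 * m + 1 : ℕ) : ZMod (2 * m + 1)) = 0 := ZMod.natCast_self _
  push_cast at this ⊢
  linear_combination this

theorem exists_goodF {n : ℕ} (hodd : Odd n) : ∃ F, GoodF n F := by
  classical
  have : NeZero n := ⟨by rintro rfl; simp at hodd⟩
  obtain ⟨u, hu⟩ := exists_half hodd
  let e : Option (ZMod n) ≃ Fin (n + 1) := Fintype.equivFinOfCardEq (by simp [ZMod.card])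
  let G : ZMod n → Option (ZMod n) → Option (ZMod n) := fun t g => match g with
    | none => some (u * t)
    | some x => if 2 * x = t then none else some (t - x)
  have g1 : ∀ t g, G t (G t g) = g := by
    intro t g
    cases g with
    | none =>
      simp only [G]
      rw [if_pos]; linear_combination t * hu
    | some x =>
      simp only [G]
      by_cases h : 2 * x = t
      · rw [if_pos h]; simp only [Option.some.injEq]; rw [← h]; linear_combination x * hu
      · rw [if_neg h]; simp only
        rw [if_neg]
        · simp
        · intro h'; apply h; linear_combination -h'
  have g2 : ∀ t g, G t g ≠ g := by
    intro t g
    cases g with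
    | none => simp [G]
    | some x =>
      simp only [G]
      split_ifs with h
      · simp
      · simp only [ne_eq, Option.some.injEq]
        intro h'; apply h; linear_combination -h'
  have g3 : ∀ g t t', G t g = G t' g → t = t' := by
    intro g t t' h
    cases g with
    | none =>
      simp only [G, Option.some.injEq] at h
      linear_combination 2 * h - (t - t') * hu
    | some x =>
      simp only [G] at h
      split_ifs at h with h1 h2 h2
      · rw [← h1, ← h2]
      · simp only [Option.some.injEq] at h; linear_combination h
  have g4 : ∀ g a, a ≠ g → ∃ t, G t g = a := by
    intro g a h
    cases g with
    | none =>
      cases a with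
      | none => simp at h
      | some y => exact ⟨2 * y, by simp only [G, Option.some.injEq]; linear_combination y * hu⟩
    | some x =>
      cases a with
      | none => exact ⟨2 * x, by simp [G]⟩
      | some y =>
        refine ⟨x + y, ?_⟩
        simp only [G]
        rw [if_neg]
        · simp
        · intro h'; apply h; rw [Option.some.injEq]; linear_combination -h'
  refine ⟨fun t g => e (G t (e.symm g)), ?_, ?_, ?_, ?_⟩
  · intro t g; simp [g1]
  · intro t g h
    apply g2 t (e.symm g); apply e.injective; simpa using h
  · intro g t t' h
    exact g3 _ _ _ (e.injective h)
  · intro g a h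
    obtain ⟨t, ht⟩ := g4 (e.symm g) (e.symm a) (by simpa using h)
    exact ⟨t, by simp [ht]⟩

abbrev IT (B : Type) (n : ℕ) := Bool ⊕ (B × ZMod n)

def actI {B : Type} {n : ℕ} (F : ZMod n → Fin (n + 1) → Fin (n + 1)) :
    IT B n → Fin (n + 1) → Fin (n + 1)
  | Sum.inl _, g => g
  | Sum.inr p, g => F p.2 g

def mateI {B : Type} {n : ℕ} (mate : B → B) : IT B n → IT B n
  | Sum.inl e => Sum.inl (!e)
  | Sum.inr p => Sum.inr (mate p.1, p.2)

def isF {B : Type} {n : ℕ} (mate : B → B) : IT B n → IT B n → Prop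
  | Sum.inr p, Sum.inr p' => p.2 = p'.2 ∧ p.1 ≠ p'.1 ∧ p'.1 ≠ mate p.1
  | _, _ => False

theorem actI_actI {B : Type} {n : ℕ} {F : ZMod n → Fin (n + 1) → Fin (n + 1)} (hF : GoodF n F)
    (i : IT B n) (g) : actI F i (actI F i g) = g := by
  cases i with
  | inl e => rfl
  | inr p => exact hF.1 _ _

theorem actI_inj {B : Type} {n : ℕ} {F : ZMod n → Fin (n + 1) → Fin (n + 1)} (hF : GoodF n F)
    (i : IT B n) {g g'} (h : actI F i g = actI F i g') : g = g' := by
  rw [← actI_actI hF i g, h, actI_actI hF]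

theorem isF.act {B : Type} {n : ℕ} {F : ZMod n → Fin (n + 1) → Fin (n + 1)} {mate : B → B}
    {i i' : IT B n} (h : isF mate i i') : actI F i' = actI F i := by
  cases i <;> cases i' <;> simp only [isF] at h
  funext g
  simp only [actI]; rw [h.1]

theorem isF.act_ne {B : Type} {n : ℕ} {F : ZMod n → Fin (n + 1) → Fin (n + 1)} (hF : GoodF n F)
    {mate : B → B} {i i' : IT B n} (h : isF mate i i') (g) : actI F i g ≠ g := by
  cases i <;> cases i' <;> simp only [isF] at h
  exact hF.2.1 _ _

theorem isF.ne {B : Type} {n : ℕ} {mate : B → B}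
    {i i' : IT B n} (h : isF mate i i') : i ≠ i' := by
  cases i <;> cases i' <;> simp only [isF] at h
  intro h'
  simp only [Sum.inr.injEq] at h'
  exact h.2.1 (by rw [h'])

theorem isF.ne_mate {B : Type} {n : ℕ} {mate : B → B}
    {i i' : IT B n} (h : isF mate i i') : i' ≠ mateI mate i := by
  cases i <;> cases i' <;> simp only [isF] at h
  intro h'
  simp only [mateI, Sum.inr.injEq] at h'
  exact h.2.2 (by rw [h'])

theorem isF.symm {B : Type} {n : ℕ} {mate : B → B} (hm : ∀ b, mate (mate b) = b)
    {i i' : IT B n} (h : isF mate i i') : isF mate i' i := by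
  cases i <;> cases i' <;> simp only [isF] at h ⊢
  exact ⟨h.1.symm, h.2.1.symm, fun h' => h.2.2 (by rw [h', hm])⟩

theorem mateI_mateI {B : Type} {n : ℕ} {mate : B → B} (hm : ∀ b, mate (mate b) = b)
    (i : IT B n) : mateI mate (mateI mate i) = i := by
  cases i <;> simp [mateI, hm]

theorem act_eq_of {B : Type} {n : ℕ} {F : ZMod n → Fin (n + 1) → Fin (n + 1)} (hF : GoodF n F)
    {mate : B → B} {i i' : IT B n} (h : ¬ isF mate i i') (hne : i ≠ i') {g}
    (hg : actI F i g = actI F i' g) : i' = mateI mate i := by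
  rcases i with e | ⟨b, t⟩ <;> rcases i' with e' | ⟨b', t'⟩ <;> simp only [isF, actI] at h hg
  · cases e <;> cases e' <;> simp_all [mateI]
  · exact (hF.2.1 _ _ hg.symm).elim
  · exact (hF.2.1 _ _ hg).elim
  · obtain rfl := hF.2.2.1 _ _ _ hg
    by_contra hcon
    exact h ⟨rfl, fun h' => hne (by rw [show b = b' from h']), fun h' => hcon (by rw [show b' = mate b from h']; rfl)⟩

theorem rook_count {B : Type} [Fintype B] {n : ℕ} {F : ZMod n → Fin (n + 1) → Fin (n + 1)}
    (hn : NeZero n) (hF : GoodF n F) {mate : B → B}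
    (vf : Prop) [Decidable vf] (hvf : ¬ vf → ∀ b, mate b ≠ b) (i : IT B n) (g a : Fin (n + 1))
    (ha : a ≠ actI F i g) :
    {i' : IT B n | ((i = i' ∧ vf ∧ ¬ (mateI mate i = i ∧ a = g)) ∨ (isF mate i i' ∧ a = g) ∨
      (i ≠ i' ∧ ¬ isF mate i i' ∧ actI F i' a = g ∧ i' ≠ mateI mate i))}.ncard
      = Fintype.card B + if vf then 1 else 0 := by
  classical
  by_cases hag : a = g
  · subst hag
    rcases i with e | ⟨b, t⟩
    · exact (ha rfl).elim
    have hset : {i' : IT B n | ((Sum.inr (b, t) = i' ∧ vf ∧ ¬ (mateI mate (Sum.inr (b, t)) = Sum.inr (b, t) ∧ a = a))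
      ∨ (isF mate (Sum.inr (b, t)) i' ∧ a = a) ∨
      (Sum.inr (b, t) ≠ i' ∧ ¬ isF mate (Sum.inr (b, t)) i' ∧ actI F i' a = a ∧ i' ≠ mateI mate (Sum.inr (b, t))))} =
      (Sum.inl '' (Set.univ : Set Bool) ∪ (fun b' : B => (Sum.inr (b', t) : IT B n)) '' ({b, mate b}ᶜ)) ∪
        {i' | Sum.inr (b, t) = i' ∧ vf ∧ mate b ≠ b} := by
      ext i'
      rcases i' with e' | ⟨b', t'⟩
      · simp [isF, actI, mateI]
      · simp only [Set.mem_ofPred_eq, Set.mem_union, Set.mem_image, Set.mem_compl_iff, Set.mem_insert_iff,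
          Set.mem_singleton_iff, isF, actI, mateI, Sum.inr.injEq, Prod.mk.injEq, and_true, reduceCtorEq,
          and_false, exists_false, false_or, hF.2.1, false_and, or_false]
        constructor
        · rintro (⟨h, h', h''⟩ | ⟨rfl, h, h'⟩)
          · exact Or.inr ⟨h, h', h''⟩
          · refine Or.inl ⟨b', ?_, rfl, rfl⟩
            rintro (rfl | rfl)
            · exact h rfl
            · exact h' rfl
        · rintro (⟨_, h, rfl, rfl⟩ | ⟨h, h', h''⟩)
          · exact Or.inr ⟨rfl, fun h' => h (Or.inl h'.symm), fun h' => h (Or.inr h')⟩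
          · exact Or.inl ⟨h, h', h''⟩
    rw [hset, Set.ncard_union_eq, Set.ncard_union_eq, Set.ncard_image_of_injective _ Sum.inl_injective,
      Set.ncard_image_of_injective]
    · have hcompl := Set.ncard_add_ncard_compl ({b, mate b} : Set B)
      rw [Nat.card_eq_fintype_card] at hcompl
      simp only [Set.ncard_univ, Nat.card_eq_fintype_card, Fintype.card_bool]
      by_cases hb : mate b = b
      · have hv : vf := by by_contra h; exact hvf h b hb
        have : {i' : IT B n | Sum.inr (b, t) = i' ∧ vf ∧ mate b ≠ b} = ∅ := by
          ext; simp [hb]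
        rw [this]
        rw [hb] at hcompl ⊢
        simp at hcompl
        simp [hv]
        omega
      · rw [Set.ncard_pair (fun h => hb h.symm)] at hcompl
        by_cases hv : vf
        · have : {i' : IT B n | Sum.inr (b, t) = i' ∧ vf ∧ mate b ≠ b} = {Sum.inr (b, t)} := by
            ext; simp [hb, hv, eq_comm]
          rw [this]; simp [hv]; omega
        · have : {i' : IT B n | Sum.inr (b, t) = i' ∧ vf ∧ mate b ≠ b} = ∅ := by
            ext; simp [hv]
          rw [this]; simp [hv]; omega
    · intro x y h; simpa using h
    · rw [Set.disjoint_left]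
      rintro _ ⟨e, -, rfl⟩ ⟨b', -, h⟩
      simp at h
    · rw [Set.disjoint_left]
      rintro _ h ⟨rfl, h', h''⟩
      simp at h
  · obtain ⟨t', ht'⟩ := hF.2.2.2 g a hag
    have hset : {i' : IT B n | ((i = i' ∧ vf ∧ ¬ (mateI mate i = i ∧ a = g)) ∨ (isF mate i i' ∧ a = g) ∨
        (i ≠ i' ∧ ¬ isF mate i i' ∧ actI F i' a = g ∧ i' ≠ mateI mate i))} =
        (fun b' : B => (Sum.inr (b', t') : IT B n)) '' Set.univ ∪ {i' | i = i' ∧ vf} := by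
      ext i'
      simp only [Set.mem_ofPred_eq, Set.mem_union, Set.mem_image, Set.mem_univ, true_and, hag, and_false,
        not_false_eq_true, and_true, false_or]
      constructor
      · rintro (h | ⟨h1, h2, h3, h4⟩)
        · exact Or.inr h
        · rcases i' with e' | ⟨b', s⟩
          · exact (hag h3).elim
          · refine Or.inl ⟨b', ?_⟩
            simp only [actI] at h3
            have : F s g = F t' g := by rw [ht', ← h3, hF.1]
            rw [hF.2.2.1 _ _ _ this]
      · rintro (⟨b', rfl⟩ | h)
        · have hh : ∀ b, i ≠ Sum.inr (b, t') := by
            rintro b rfl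
            exact ha ht'.symm
          refine Or.inr ⟨hh b', ?_, ?_, ?_⟩
          · rcases i with e | ⟨b, t⟩
            · simp [isF]
            · rintro ⟨h, -⟩
              simp only at h
              exact hh b (by rw [h])
          · simp only [actI]; rw [← ht', hF.1]
          · rcases i with e | ⟨b, t⟩
            · simp [mateI]
            · intro h
              simp only [mateI, Sum.inr.injEq, Prod.mk.injEq] at h
              exact hh b (by rw [h.2])
        · exact Or.inl h
    rw [hset, Set.ncard_union_eq, Set.ncard_image_of_injective]
    · simp only [Set.ncard_univ, Nat.card_eq_fintype_card]
      by_cases hv : vf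
      · have : {i' : IT B n | i = i' ∧ vf} = {i} := by
            ext; simp [hv, eq_comm]
        rw [this]; simp [hv]
      · have : {i' : IT B n | i = i' ∧ vf} = ∅ := by
            ext; simp [hv]
        rw [this]; simp [hv]
    · intro x y h; simpa using h
    · rw [Set.disjoint_left]
      rintro _ ⟨b, -, rfl⟩ ⟨rfl, -⟩
      exact ha ht'.symm

theorem rest_count {I C : Type} [Fintype I] [Fintype C] (S : C → I → Prop)
    (h1 : ∀ c c' i, S c i → S c' i → c = c') (h2 : ∀ c, {i | S c i}.ncard = 2) (p : I → Prop)
    (h3 : ∀ i, p i → ∀ c, ¬ S c i) :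
    {i | (∀ c, ¬ S c i) ∧ ¬ p i}.ncard + {i | p i}.ncard + 2 * Fintype.card C = Fintype.card I := by
  classical
  have hB : {i | ∃ c, S c i}.ncard = 2 * Fintype.card C := by
    have : {i | ∃ c, S c i} = ((Finset.univ.biUnion (fun c => Finset.univ.filter (fun i => S c i)) : Finset I) : Set I) := by
      ext; simp
    rw [this, Set.ncard_coe_finset, Finset.card_biUnion]
    · rw [Finset.sum_congr rfl (g := fun _ => 2)]
      · simp [mul_comm]
      · intro c _
        rw [← h2 c, Set.ncard_eq_toFinset_card']; congr 1; ext; simp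
    · intro c _ c' _ hne
      rw [Function.onFun, Finset.disjoint_left]
      intro i hi hi'
      exact hne (h1 c c' i (by simpa using hi) (by simpa using hi'))
  rw [← hB, ← Set.ncard_union_eq, ← Set.ncard_union_eq, ← Nat.card_eq_fintype_card, ← Set.ncard_univ]
  · congr 1
    ext i
    simp only [Set.mem_union, Set.mem_ofPred_eq, Set.mem_univ, iff_true]
    by_cases h : ∃ c, S c i
    · exact Or.inr h
    · push Not at h
      tauto
  · rw [Set.disjoint_left]
    rintro i (⟨h, -⟩ | h) ⟨c, hc⟩
    · exact h c hc
    · exact h3 i h c hc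
  · rw [Set.disjoint_left]
    rintro i ⟨-, h⟩ h'
    exact h h'

theorem framework {B C : Type} [Fintype B] [Fintype C] {n : ℕ} (hodd : Odd n)
    (mate : B → B) (hm : ∀ b, mate (mate b) = b) (vf : Prop) (hvf : ¬ vf → ∀ b, mate b ≠ b)
    (hpar : vf ↔ Odd (Fintype.card B))
    (S : C → IT B n → IT B n → Prop) (flip : C → IT B n → Prop)
    (hS : ∀ c i i', S c i i' → S c i' i)
    (hSv : ∀ c i, S c i i → ¬ vf)
    (hS1 : ∀ c c' i i', S c i i' → S c' i i' → c = c')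
    (hSF : ∀ i i', isF mate i i' → ∃ c, S c i i')
    (hflF : ∀ c i i', S c i i' → isF mate i i' → (flip c i ↔ ¬ flip c i'))
    (hflN : ∀ c i i', S c i i' → ¬ isF mate i i' → i ≠ i' → ¬ flip c i)
    (hdeg : ∀ c i, {i' | S c i i'}.ncard = 2) :
    HasCol n (Fin (n + 1) × IT B n) := by
  classical
  have hNZ : NeZero n := ⟨by rintro rfl; simp at hodd⟩
  obtain ⟨F, hF⟩ := exists_goodF hodd
  have hrd : ∀ i i', ∃ o : Option C, ∀ c, o = some c ↔ S c i i' := by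
    intro i i'
    by_cases h : ∃ c, S c i i'
    · obtain ⟨c, hc⟩ := h
      refine ⟨some c, fun c' => ⟨?_, ?_⟩⟩
      · intro h; simp only [Option.some.injEq] at h; rw [← h]; exact hc
      · intro h; rw [hS1 _ _ _ _ h hc]
    · exact ⟨none, fun c => ⟨fun h' => by simp at h', fun h' => (h ⟨c, h'⟩).elim⟩⟩
  choose rd hrd using hrd
  have hrds : ∀ i i', rd i i' = rd i' i := by
    intro i i'
    apply Option.ext
    intro c
    rw [hrd, hrd]
    exact ⟨hS _ _ _, hS _ _ _⟩
  have hrdn : ∀ i i', rd i i' = none ↔ ∀ c, ¬ S c i i' := by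
    intro i i'
    rw [Option.eq_none_iff_forall_ne_some]
    simp only [ne_eq, hrd]
  let part : Fin (n + 1) × IT B n → Fin (n + 1) × IT B n := fun x => if mateI mate x.2 = x.2 then (actI F x.2 x.1, x.2) else (x.1, mateI mate x.2)
  let rook : Fin (n + 1) × IT B n → Fin (n + 1) × IT B n → Prop := fun x y => (x.2 = y.2 ∧ vf) ∨ (isF mate x.2 y.2 ∧ y.1 = actI F x.2 x.1) ∨
    (x.2 ≠ y.2 ∧ ¬ isF mate x.2 y.2 ∧ y.1 = x.1)
  let col : Fin (n + 1) × IT B n → Fin (n + 1) × IT B n → Option (Option (Option C)) := fun x y =>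
    if y = part x then none else if rook x y then some none else some (some (rd x.2 y.2))
  let ρ : Option (Option C) → IT B n → Fin (n + 1) → Fin (n + 1) := fun j i g => match j with
    | none => actI F i g
    | some none => g
    | some (some c) => if flip c i then actI F i g else g
  have hρ : ∀ j i g, ρ j i (ρ j i g) = g := by
    intro j i g
    rcases j with _ | _ | c
    · exact actI_actI hF i g
    · rfl
    · simp only [ρ]
      split_ifs
      · exact actI_actI hF i g
      · rfl
  have hρi : ∀ j i g g', ρ j i g = ρ j i g' → g = g' := by
    intro j i g g' h
    rw [← hρ j i g, h, hρ]
  have hmi : ∀ e : Bool, mateI mate (Sum.inl e : IT B n) ≠ Sum.inl e := by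
    intro e; cases e <;> simp [mateI]
  have hmv : ∀ i : IT B n, mateI mate i = i → vf ∧ ∀ g, actI F i g ≠ g := by
    intro i h
    rcases i with e | ⟨b, t⟩
    · exact (hmi e h).elim
    · simp only [mateI, Sum.inr.injEq, Prod.mk.injEq, and_true] at h
      refine ⟨?_, fun g => hF.2.1 _ _⟩
      by_contra h'
      exact hvf h' b h
  have hpp : ∀ x, part (part x) = x := by
    intro x
    simp only [part]
    by_cases h : mateI mate x.2 = x.2
    · simp [h, actI_actI hF]
    · rw [if_neg h, if_neg]
      · simp [mateI_mateI hm]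
      · simp only [mateI_mateI hm]; exact fun h' => h h'.symm
  have hpne : ∀ x, part x ≠ x := by
    intro x hx
    simp only [part] at hx
    split_ifs at hx with h
    · exact (hmv _ h).2 x.1 (congrArg Prod.fst hx)
    · exact h (congrArg Prod.snd hx)
  have hrs : ∀ x y, rook x y → rook y x := by
    rintro x y (⟨h, h'⟩ | ⟨h, h'⟩ | ⟨h, h', h''⟩)
    · exact Or.inl ⟨h.symm, h'⟩
    · refine Or.inr (Or.inl ⟨h.symm hm, ?_⟩)
      rw [h.act, h', actI_actI hF]
    · exact Or.inr (Or.inr ⟨h.symm, fun h3 => h' (h3.symm hm), h''.symm⟩)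
  have hcS : ∀ x y c, col x y = some (some (some c)) → y ≠ part x ∧ ¬ rook x y ∧ S c x.2 y.2 := by
    intro x y c h
    simp only [col] at h
    split_ifs at h with h1 h2
    · simp at h
    · simp only [Option.some.injEq] at h
      exact ⟨h1, h2, (hrd _ _ _).1 h⟩
  have hcR : ∀ x y, col x y = some (some none) ↔ y ≠ part x ∧ ¬ rook x y ∧ ∀ c, ¬ S c x.2 y.2 := by
    intro x y
    simp only [col]
    split_ifs with h1 h2
    · simp [h1]
    · simp [h2]
    · rw [← hrdn]; simp [h1, h2]
  have hcK : ∀ x y, col x y = some none ↔ y ≠ part x ∧ rook x y := by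
    intro x y
    simp only [col]
    split_ifs with h1 h2 <;> simp [*]
  refine ⟨Option (Option C), inferInstance, fun j x => ρ j x.2 x.1, col,
    fun j => match j with
      | none => (Fintype.card B + if vf then 1 else 0) / 2
      | some none => (Fintype.card (IT B n) - (if vf then 1 else 0) - 2 * Fintype.card C) / 2
      | some (some c) => 1, ?_, ?_, ?_, ?_⟩
  · intro x y
    have e1 : y = part x ↔ x = part y :=
      ⟨fun h => by rw [h, hpp], fun h => by rw [h, hpp]⟩
    have e2 : rook x y ↔ rook y x := ⟨hrs _ _, hrs _ _⟩
    simp only [col, e1, e2, hrds x.2 y.2]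
  · intro x
    refine ⟨part x, ⟨hpne x, by simp [col]⟩, ?_⟩
    rintro y ⟨_, hy⟩
    by_contra h
    simp only [col, if_neg h] at hy
    split_ifs at hy
  · intro x y j hxy hc heq
    dsimp only at heq
    have hgi : x.2 = y.2 → False := by
      intro h
      rw [← h] at heq
      exact hxy (Prod.ext (hρi _ _ _ _ heq) h)
    rcases j with _ | _ | c
    · obtain ⟨h1, h2⟩ := (hcK _ _).1 hc
      simp only [ρ] at heq
      rcases h2 with ⟨h, -⟩ | ⟨h, h'⟩ | ⟨h, h', h''⟩
      · exact hgi h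
      · rw [h.act, h', actI_actI hF] at heq
        exact h.act_ne hF _ heq
      · rw [h''] at heq
        have := act_eq_of hF h' h heq
        apply h1
        simp only [part]
        rw [if_neg]
        · exact Prod.ext h'' this
        · rw [← this]; exact h.symm
    · obtain ⟨h1, h2, h3⟩ := (hcR _ _).1 hc
      simp only [ρ] at heq
      by_cases hf : isF mate x.2 y.2
      · obtain ⟨c, hc⟩ := hSF _ _ hf
        exact h3 c hc
      · exact h2 (Or.inr (Or.inr ⟨hgi, hf, heq.symm⟩))
    · obtain ⟨h1, h2, h3⟩ := hcS _ _ _ hc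
      simp only [ρ] at heq
      by_cases hf : isF mate x.2 y.2
      · have := hflF _ _ _ h3 hf
        apply h2
        refine Or.inr (Or.inl ⟨hf, ?_⟩)
        by_cases hfl : flip c x.2
        · rw [if_pos hfl, if_neg (this.1 hfl)] at heq
          exact heq.symm
        · rw [if_neg hfl, if_pos (by tauto)] at heq
          rw [heq, hf.act, actI_actI hF]
      · have e1 := hflN _ _ _ h3 hf hgi
        have e2 := hflN _ _ _ (hS _ _ _ h3) (fun h => hf (h.symm hm)) (fun h => hgi h.symm)
        rw [if_neg e1, if_neg e2] at heq
        exact h2 (Or.inr (Or.inr ⟨hgi, hf, heq.symm⟩))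
  · intro j x a ha
    have hred : {y | col x y = some j ∧ ρ j y.2 y.1 = a}.ncard =
        {i' | col x (ρ j i' a, i') = some j}.ncard := by
      rw [← Set.ncard_image_of_injective (f := fun i' : IT B n => ((ρ j i' a, i') : Fin (n + 1) × IT B n))]
      · congr 1
        ext ⟨g', i'⟩
        simp only [Set.mem_ofPred_eq, Set.mem_image, Prod.mk.injEq]
        constructor
        · rintro ⟨h, rfl⟩
          exact ⟨i', by rw [hρ]; exact h, by rw [hρ], rfl⟩
        · rintro ⟨i'', h, rfl, rfl⟩
          exact ⟨h, by rw [hρ]⟩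
      · intro i i' h
        exact congrArg Prod.snd h
    rw [hred]
    obtain ⟨g, i⟩ := x
    rcases j with _ | _ | c
    · have e : {i' | col (g, i) (ρ none i' a, i') = some none} =
        {i' : IT B n | ((i = i' ∧ vf ∧ ¬ (mateI mate i = i ∧ a = g)) ∨ (isF mate i i' ∧ a = g) ∨
        (i ≠ i' ∧ ¬ isF mate i i' ∧ actI F i' a = g ∧ i' ≠ mateI mate i))} := by
        ext i'
        simp only [Set.mem_ofPred_eq, hcK, ρ, rook]
        have hpart : (actI F i' a, i') = part (g, i) ↔
          (i' = i ∧ mateI mate i = i ∧ a = g) ∨ (mateI mate i ≠ i ∧ i' = mateI mate i ∧ actI F i' a = g) := by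
          simp only [part]
          split_ifs with h
          · simp only [Prod.mk.injEq]
            constructor
            · rintro ⟨h1, rfl⟩; exact Or.inl ⟨rfl, h, actI_inj hF _ h1⟩
            · rintro (⟨rfl, -, rfl⟩ | ⟨h', -⟩)
              · exact ⟨rfl, rfl⟩
              · exact (h' h).elim
          · simp only [Prod.mk.injEq]
            tauto
        rw [ne_eq, hpart]
        constructor
        · rintro ⟨h1, ⟨rfl, h3⟩ | ⟨h2, h3⟩ | ⟨h2, h3, h4⟩⟩
          · exact Or.inl ⟨rfl, h3, fun h => h1 (Or.inl ⟨rfl, h⟩)⟩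
          · refine Or.inr (Or.inl ⟨h2, ?_⟩)
            rw [h2.act] at h3
            exact actI_inj hF _ h3
          · refine Or.inr (Or.inr ⟨h2, h3, h4, fun h5 => h1 (Or.inr ⟨?_, h5, h4⟩)⟩)
            rw [← h5]; exact h2.symm
        · rintro (⟨rfl, h2, h3⟩ | ⟨h2, rfl⟩ | ⟨h2, h3, h4, h5⟩)
          · refine ⟨?_, Or.inl ⟨rfl, h2⟩⟩
            rintro (⟨-, h⟩ | ⟨h, h', -⟩)
            · exact h3 h
            · exact h h'.symm
          · refine ⟨?_, Or.inr (Or.inl ⟨h2, by rw [h2.act]⟩)⟩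
            rintro (⟨h, -⟩ | ⟨h, h', -⟩)
            · exact h2.ne h.symm
            · exact h2.ne_mate h'
          · refine ⟨?_, Or.inr (Or.inr ⟨h2, h3, h4⟩)⟩
            rintro (⟨h, -⟩ | ⟨h, h', -⟩)
            · exact h2 h.symm
            · exact h5 h'
      rw [e, rook_count hNZ hF vf hvf i g a ha]
      simp only
      rw [Nat.mul_div_cancel']
      by_cases hv : vf
      · rw [if_pos hv]
        exact ((hpar.1 hv).add_one).two_dvd
      · rw [if_neg hv]
        have : ¬ Odd (Fintype.card B) := fun h => hv (hpar.2 h)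
        exact (Nat.not_odd_iff_even.1 this).two_dvd
    · have hag : a ≠ g := ha
      have e : {i' | col (g, i) (ρ (some none) i' a, i') = some (some none)} =
        {i' | (∀ c, ¬ S c i i') ∧ ¬ (i' = i ∧ vf)} := by
        ext i'
        simp only [Set.mem_ofPred_eq, hcR, ρ, rook]
        constructor
        · rintro ⟨h1, h2, h3⟩
          exact ⟨h3, fun h => h2 (Or.inl ⟨h.1.symm, h.2⟩)⟩
        · rintro ⟨h1, h2⟩
          refine ⟨?_, ?_, h1⟩
          · simp only [part]
            split_ifs with h
            · intro h'
              exact h2 ⟨congrArg Prod.snd h', (hmv _ h).1⟩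
            · intro h'
              exact hag (congrArg Prod.fst h')
          · rintro (⟨h, h'⟩ | ⟨h, h'⟩ | ⟨h, h', h''⟩)
            · exact h2 ⟨h.symm, h'⟩
            · obtain ⟨c, hc⟩ := hSF _ _ h
              exact h1 c hc
            · exact hag h''
      rw [e]
      have hr := rest_count (fun c i' => S c i i') (fun c c' i' => hS1 c c' i i') (fun c => hdeg c i)
        (fun i' => i' = i ∧ vf) (by rintro i' ⟨rfl, h⟩ c hc; exact hSv c _ hc h)
      have hone : {i' : IT B n | i' = i ∧ vf}.ncard = if vf then 1 else 0 := by
        by_cases hv : vf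
        · have : {i' : IT B n | i' = i ∧ vf} = {i} := by ext; simp [hv]
          rw [this]; simp [hv]
        · have : {i' : IT B n | i' = i ∧ vf} = ∅ := by ext; simp [hv]
          rw [this]; simp [hv]
      rw [hone] at hr
      simp only
      have hcI : Fintype.card (IT B n) = 2 + Fintype.card B * n := by
        simp [ZMod.card]
      have hev : Even (Fintype.card (IT B n) - if vf then 1 else 0) := by
        rw [hcI]
        by_cases hv : vf
        · rw [if_pos hv]
          obtain ⟨r, hr⟩ := (hpar.1 hv).mul hodd
          exact ⟨r + 1, by omega⟩
        · rw [if_neg hv]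
          have : ¬ Odd (Fintype.card B) := fun h => hv (hpar.2 h)
          obtain ⟨r, hr⟩ := (Nat.not_odd_iff_even.1 this).mul_right n
          exact ⟨r + 1, by omega⟩
      obtain ⟨r, hr'⟩ := hev
      omega
    · have e : {i' | col (g, i) (ρ (some (some c)) i' a, i') = some (some (some c))} = {i' | S c i i'} := by
        ext i'
        simp only [Set.mem_ofPred_eq]
        constructor
        · intro h; exact (hcS _ _ _ h).2.2
        · intro h
          have hr := (hrd _ _ _).2 h
          simp only [ρ] at ha
          have goal : (ρ (some (some c)) i' a, i') ≠ part (g, i) ∧ ¬ rook (g, i) (ρ (some (some c)) i' a, i') := by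
            simp only [part, rook, ρ]
            by_cases hii : i = i'
            · subst hii
              have hv := hSv _ _ h
              have hm1 : mateI mate i ≠ i := fun h => hv (hmv _ h).1
              rw [if_neg hm1]
              refine ⟨fun h => hm1 (congrArg Prod.snd h).symm, ?_⟩
              rintro (⟨-, h⟩ | ⟨h, -⟩ | ⟨h, -⟩)
              · exact hv h
              · exact h.ne rfl
              · exact h rfl
            by_cases hf : isF mate i i'
            · constructor
              · split_ifs with h1
                all_goals
                  intro h2
                  have h3 := congrArg Prod.snd h2
                  first
                  | exact hf.ne h3.symm
                  | exact hf.ne_mate h3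
              · rintro (⟨h, -⟩ | ⟨-, h1⟩ | ⟨-, h, -⟩)
                · exact hii h
                · have := hflF _ _ _ h hf
                  by_cases hfl : flip c i
                  · rw [if_pos hfl] at ha
                    rw [if_neg (this.1 hfl)] at h1
                    exact ha h1
                  · rw [if_neg hfl] at ha
                    rw [if_pos (by tauto), hf.act] at h1
                    exact ha (actI_inj hF _ h1)
                · exact h hf
            · have e1 := hflN _ _ _ h hf hii
              have e2 := hflN _ _ _ (hS _ _ _ h) (fun h => hf (h.symm hm)) (fun h => hii h.symm)
              rw [if_neg e1] at ha
              rw [if_neg e2]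
              constructor
              · split_ifs with h1
                · intro h2; exact hii (congrArg Prod.snd h2).symm
                · intro h2; exact ha (congrArg Prod.fst h2)
              · rintro (⟨h, -⟩ | ⟨h, -⟩ | ⟨-, -, h⟩)
                · exact hii h
                · exact hf h
                · exact ha h
          simp only [col]
          rw [if_neg goal.1, if_neg goal.2, hr]
      rw [e, hdeg]; rfl

theorem two_ne_zero_zmod {n : ℕ} (hn : 1 < n) (hodd : Odd n) : (1 : ZMod n) ≠ 0 ∧ (2 : ZMod n) ≠ 0 := by
  have : Fact (1 < n) := ⟨hn⟩
  obtain ⟨u, hu⟩ := exists_half hodd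
  refine ⟨one_ne_zero, fun h => ?_⟩
  rw [h, zero_mul] at hu
  exact zero_ne_one hu

abbrev XT (L : ℕ) (e : Prop) := {x : ZMod L // e → x ≠ 0}

def SE (n L : ℕ) (e : Prop) (s : ZMod L) : IT (XT L e × Bool) n → IT (XT L e × Bool) n → Prop
  | Sum.inl _, Sum.inl _ => e ∧ s = 0
  | Sum.inl a, Sum.inr p => 2 * p.1.1.1 = s ∧ a = p.1.2 ∧ (p.2 = 0 ∨ p.2 = -1)
  | Sum.inr p, Sum.inl a => 2 * p.1.1.1 = s ∧ a = p.1.2 ∧ (p.2 = 0 ∨ p.2 = -1)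
  | Sum.inr p, Sum.inr p' => (p.2 = p'.2 ∧ p.1.1 ≠ p'.1.1 ∧ p.1.1.1 + p'.1.1.1 = s) ∨
      (p.1.1 = p'.1.1 ∧ 2 * p.1.1.1 = s ∧ p.1.2 = p'.1.2 ∧
        ((p'.2 = p.2 + 1 ∧ p.2 ≠ -1) ∨ (p.2 = p'.2 + 1 ∧ p'.2 ≠ -1))) ∨
      (e ∧ p.1.1 = p'.1.1 ∧ p.1.1.1 = s ∧ p.1.2 ≠ p'.1.2 ∧ (p'.2 = p.2 + 1 ∨ p.2 = p'.2 + 1))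

def flipE (n L : ℕ) (e : Prop) (s : ZMod L) : IT (XT L e × Bool) n → Prop
  | Sum.inl _ => False
  | Sum.inr p => p.1.1.1.val < (s - p.1.1.1).val

set_option maxHeartbeats 1000000 in
theorem caseE {n L : ℕ} (hn : 1 < n) (hodd : Odd n) (hL : Odd L) (e : Prop) [Fintype (XT L e)] :
    HasCol n (Fin (n + 1) × IT (XT L e × Bool) n) := by
  classical
  have hNZ : NeZero n := ⟨by rintro rfl; simp at hodd⟩
  have hNL : NeZero L := ⟨by rintro rfl; simp at hL⟩
  obtain ⟨h1n, h2n⟩ := two_ne_zero_zmod hn hodd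
  obtain ⟨u, hu⟩ := exists_half hL
  refine framework hodd (fun b => (b.1, !b.2)) (by simp) False (fun _ b h => ?_) ?_
    (SE n L e) (flipE n L e) ?_ ?_ ?_ ?_ ?_ ?_ ?_
  · have := congrArg Prod.snd h
    simp at this
  · simp
  · rintro s (a | ⟨⟨x, ε⟩, t⟩) (a' | ⟨⟨x', ε'⟩, t'⟩) h
    · exact h
    · exact h
    · exact h
    · simp only [SE] at h ⊢
      rcases h with ⟨h1, h2, h3⟩ | ⟨h1, h2, h3, h4⟩ | ⟨h1, h2, h3, h4, h5⟩
      · exact Or.inl ⟨h1.symm, h2.symm, by rw [add_comm]; exact h3⟩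
      · exact Or.inr (Or.inl ⟨h1.symm, by rw [← h1]; exact h2, h3.symm, h4.symm⟩)
      · exact Or.inr (Or.inr ⟨h1, h2.symm, by rw [← h2]; exact h3, h4.symm, h5.symm⟩)
  · simp
  · rintro s s' (a | ⟨⟨x, ε⟩, t⟩) (a' | ⟨⟨x', ε'⟩, t'⟩) h h'
    · rw [h.2, h'.2]
    · rw [← h.1, ← h'.1]
    · rw [← h.1, ← h'.1]
    · simp only [SE] at h h'
      rcases h with ⟨h1, h2, h3⟩ | ⟨h1, h2, h3, h4⟩ | ⟨h1, h2, h3, h4, h5⟩ <;>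
      rcases h' with ⟨h1', h2', h3'⟩ | ⟨h1', h2', h3', h4'⟩ | ⟨h1', h2', h3', h4', h5'⟩ <;>
      first
      | exact (by assumption : _ = s).symm.trans (by assumption : _ = s')
      | contradiction
  · rintro (a | ⟨⟨x, ε⟩, t⟩) (a' | ⟨⟨x', ε'⟩, t'⟩) h <;> simp only [isF] at h
    obtain ⟨rfl, h1, h2⟩ := h
    refine ⟨x.1 + x'.1, Or.inl ⟨rfl, ?_, rfl⟩⟩
    simp only
    rintro rfl
    cases ε <;> cases ε' <;> simp at h1 h2
  · rintro s (a | ⟨⟨x, ε⟩, t⟩) (a' | ⟨⟨x', ε'⟩, t'⟩) h h' <;> simp only [isF] at h'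
    simp only [flipE]
    have hne : x ≠ x' := by
      obtain ⟨rfl, h1, h2⟩ := h'
      rintro rfl
      cases ε <;> cases ε' <;> simp at h1 h2
    have hs : x.1 + x'.1 = s := by
      simp only [SE] at h
      rcases h with ⟨h1, h2, h3⟩ | ⟨h1, h2, h3, h4⟩ | ⟨h1, h2, h3, h4, h5⟩
      · exact h3
      · exact (hne h1).elim
      · exact (hne h2).elim
    have e1 : s - x.1 = x'.1 := by rw [← hs]; ring
    have e2 : s - x'.1 = x.1 := by rw [← hs]; ring
    rw [e1, e2]
    have : x.1.val ≠ x'.1.val := fun h => hne (Subtype.ext (ZMod.val_injective _ h))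
    omega
  · rintro s (a | ⟨⟨x, ε⟩, t⟩) (a' | ⟨⟨x', ε'⟩, t'⟩) h h' _
    · simp [flipE]
    · simp [flipE]
    · simp only [flipE]
      rw [← h.1]; simp [two_mul]
    · simp only [flipE]
      simp only [SE] at h
      rcases h with ⟨h1, h2, h3⟩ | ⟨h1, h2, h3, h4⟩ | ⟨h1, h2, h3, h4, h5⟩
      · exfalso
        apply h'
        refine ⟨h1, ?_, ?_⟩
        · intro h; exact h2 (congrArg Prod.fst h)
        · intro h; exact h2 (congrArg Prod.fst h).symm
      · rw [← h2]; simp [two_mul]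
      · rw [← h3]; simp
  · rintro s (a | ⟨⟨x, ε⟩, t⟩)
    · by_cases hs : e ∧ s = 0
      · have : {i' | SE n L e s (Sum.inl a) i'} = {Sum.inl true, Sum.inl false} := by
          ext i'
          rcases i' with a' | ⟨⟨x', ε'⟩, t'⟩
          · cases a' <;> simp [SE, hs]
          · simp only [Set.mem_ofPred_eq, SE, Set.mem_insert_iff, Set.mem_singleton_iff, reduceCtorEq, or_false, iff_false]
            rintro ⟨h, -⟩
            apply x'.2 hs.1
            have h0 : 2 * x'.1 = 0 := h.trans hs.2
            linear_combination u * h0 - x'.1 * hu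
        rw [this, Set.ncard_pair (by simp)]
      · have hX : e → u * s ≠ 0 := by
          intro he h
          apply hs
          refine ⟨he, ?_⟩
          linear_combination 2 * h - s * hu
        have : {i' | SE n L e s (Sum.inl a) i'} =
            {Sum.inr ((⟨u * s, hX⟩, a), 0), Sum.inr ((⟨u * s, hX⟩, a), -1)} := by
          ext i'
          rcases i' with a' | ⟨⟨x', ε'⟩, t'⟩
          · simp only [Set.mem_ofPred_eq, SE, Set.mem_insert_iff, Set.mem_singleton_iff, reduceCtorEq, or_false, iff_false]
            exact hs
          · simp only [Set.mem_ofPred_eq, SE, Set.mem_insert_iff, Set.mem_singleton_iff, Sum.inr.injEq, Prod.mk.injEq, Subtype.ext_iff]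
            have : 2 * x'.1 = s ↔ x'.1 = u * s := by
              constructor
              · rintro rfl; linear_combination - x'.1 * hu
              · intro h; linear_combination 2 * h + s * hu
            rw [this]
            tauto
        rw [this, Set.ncard_pair]
        simpa using h1n
    · by_cases hs : 2 * x.1 = s
      · have hxs : e → x.1 ≠ s := by
          intro he h
          apply x.2 he
          linear_combination hs - h
        have hpm : t + 1 ≠ t - 1 := by
          intro h; apply h2n; linear_combination h
        have hset : ∀ i', SE n L e s (Sum.inr ((x, ε), t)) i' ↔
            i' = (if t = -1 then Sum.inl ε else Sum.inr ((x, ε), t + 1)) ∨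
            i' = (if t = 0 then Sum.inl ε else Sum.inr ((x, ε), t - 1)) := by
          intro i'
          rcases i' with a' | ⟨⟨x', ε'⟩, t'⟩
          · simp only [SE, hs, true_and]
            split_ifs with h1 h2 h2 <;> simp [h1, h2]
          · have e1 : t = t' + 1 ∧ t' ≠ -1 ↔ t' = t - 1 ∧ t ≠ 0 := by
              constructor
              · rintro ⟨rfl, h⟩
                exact ⟨by ring, fun h' => h (by linear_combination h')⟩
              · rintro ⟨rfl, h⟩
                exact ⟨by ring, fun h' => h (by linear_combination h')⟩
            have e2 : ¬ (x ≠ x' ∧ x.1 + x'.1 = s) := by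
              rintro ⟨h, h'⟩
              apply h; apply Subtype.ext
              linear_combination hs - h'
            simp only [SE, hs, true_and, e1, e2, and_false, false_or]
            have e3 : ¬ (e ∧ x = x' ∧ x.1 = s ∧ ε ≠ ε' ∧ (t' = t + 1 ∨ t = t' + 1)) := fun h => hxs h.1 h.2.2.1
            rw [or_iff_left e3]
            rw [eq_comm (a := x), eq_comm (a := ε)]
            have h01 : ¬ (t = -1 ∧ t = 0) := fun h => h1n (by linear_combination h.1 - h.2)
            by_cases h1 : t = -1 <;> by_cases h2 : t = 0
            · exact (h01 ⟨h1, h2⟩).elim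
            all_goals
              first
              | replace h1 := eq_false h1
              | replace h1 := eq_true h1
              first
              | replace h2 := eq_false h2
              | replace h2 := eq_true h2
            all_goals simp only [h1, h2, if_true, if_false, reduceCtorEq, Sum.inr.injEq, Prod.mk.injEq, ne_eq, not_true_eq_false,
              not_false_eq_true, and_false, and_true, or_false, false_or, iff_self, ← and_or_left, and_assoc]
        have : {i' | SE n L e s (Sum.inr ((x, ε), t)) i'} =
            {(if t = -1 then Sum.inl ε else Sum.inr ((x, ε), t + 1)),
             (if t = 0 then Sum.inl ε else Sum.inr ((x, ε), t - 1))} := by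
          ext i'; exact hset i'
        rw [this, Set.ncard_pair]
        split_ifs with h1 h2 h2
        · exfalso; apply h1n; linear_combination h1 - h2
        · simp
        · simp
        · simpa using hpm
      · by_cases hX : e ∧ s = x.1
        · have : {i' | SE n L e s (Sum.inr ((x, ε), t)) i'} =
              {Sum.inr ((x, !ε), t + 1), Sum.inr ((x, !ε), t - 1)} := by
            ext i'
            rcases i' with a' | ⟨⟨x', ε'⟩, t'⟩
            · simp [SE, hs]
            · have e2 : ¬ (x.1 + x'.1 = s) := by
                intro h
                apply x'.2 hX.1
                linear_combination h + hX.2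
              have e3 : t = t' + 1 ↔ t' = t - 1 := by
                constructor <;> rintro rfl <;> ring
              have e4 : ε ≠ ε' ↔ ε' = !ε := by cases ε <;> cases ε' <;> simp
              simp only [Set.mem_ofPred_eq, SE, hs, e2, e3, e4, hX.1, eq_true hX.2.symm, Set.mem_insert_iff,
                Set.mem_singleton_iff, Sum.inr.injEq, Prod.mk.injEq, and_false, false_and, false_or, true_and]
              rw [eq_comm (a := x)]
              tauto
          rw [this, Set.ncard_pair]
          simp only [ne_eq, Sum.inr.injEq, Prod.mk.injEq, true_and]
          intro h; apply h2n; linear_combination h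
        · have hX' : e → s - x.1 ≠ 0 := fun he h => hX ⟨he, by linear_combination h⟩
          have : {i' | SE n L e s (Sum.inr ((x, ε), t)) i'} =
              {Sum.inr ((⟨s - x.1, hX'⟩, true), t), Sum.inr ((⟨s - x.1, hX'⟩, false), t)} := by
            ext i'
            rcases i' with a' | ⟨⟨x', ε'⟩, t'⟩
            · simp [SE, hs]
            · have e2 : (x ≠ x' ∧ x.1 + x'.1 = s) ↔ x'.1 = s - x.1 := by
                constructor
                · rintro ⟨-, h⟩; linear_combination h
                · intro h
                  refine ⟨?_, by linear_combination h⟩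
                  rintro rfl
                  apply hs; linear_combination h
              have e3 : ¬ (e ∧ x = x' ∧ x.1 = s ∧ ε ≠ ε' ∧ (t' = t + 1 ∨ t = t' + 1)) :=
                fun h => hX ⟨h.1, h.2.2.1.symm⟩
              simp only [Set.mem_ofPred_eq, SE, hs, e2, Set.mem_insert_iff, e3,
                Set.mem_singleton_iff, Sum.inr.injEq, Prod.mk.injEq, and_false, false_and, or_false,
                Subtype.ext_iff]
              rw [eq_comm (a := t)]
              cases ε' <;> simp <;> tauto
          rw [this, Set.ncard_pair]
          simp

def SO (n h : ℕ) (c : Fin h) : IT (ZMod (2 * h + 1)) n → IT (ZMod (2 * h + 1)) n → Prop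
  | Sum.inl _, Sum.inl _ => False
  | Sum.inl e, Sum.inr p => (p.1 = (c.val : ZMod (2 * h + 1)) ∧ p.2 = (if e then 2 else 1)) ∨
      (p.1 = (c.val : ZMod (2 * h + 1)) - h ∧ p.2 = (if e then 1 else 0))
  | Sum.inr p, Sum.inl e => (p.1 = (c.val : ZMod (2 * h + 1)) ∧ p.2 = (if e then 2 else 1)) ∨
      (p.1 = (c.val : ZMod (2 * h + 1)) - h ∧ p.2 = (if e then 1 else 0))
  | Sum.inr p, Sum.inr p' =>
      (p.2 = p'.2 ∧ p.1 ≠ p'.1 ∧ (p.1 + p'.1 = 2 * (c.val : ZMod (2 * h + 1)) ∨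
        p.1 + p'.1 = 2 * (c.val : ZMod (2 * h + 1)) + 1)) ∨
      (p.1 = (c.val : ZMod (2 * h + 1)) - h ∧ p'.1 = (c.val : ZMod (2 * h + 1)) ∧
        p'.2 = p.2 + 1 ∧ p.2 ≠ 0 ∧ p.2 ≠ 1) ∨
      (p'.1 = (c.val : ZMod (2 * h + 1)) - h ∧ p.1 = (c.val : ZMod (2 * h + 1)) ∧
        p.2 = p'.2 + 1 ∧ p'.2 ≠ 0 ∧ p'.2 ≠ 1)

def flipO (n h : ℕ) (c : Fin h) : IT (ZMod (2 * h + 1)) n → Prop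
  | Sum.inl _ => False
  | Sum.inr p => 1 ≤ (p.1 - (c.val : ZMod (2 * h + 1))).val ∧
      (p.1 - (c.val : ZMod (2 * h + 1))).val ≤ h

set_option maxHeartbeats 1000000 in
theorem caseO {n h : ℕ} (hn : 1 < n) (hodd : Odd n) :
    HasCol n (Fin (n + 1) × IT (ZMod (2 * h + 1)) n) := by
  classical
  have hNZ : NeZero n := ⟨by rintro rfl; simp at hodd⟩
  obtain ⟨h1n, h2n⟩ := two_ne_zero_zmod hn hodd
  have hk : 2 * (h : ZMod (2 * h + 1)) + 1 = 0 := by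
    have := ZMod.natCast_self (2 * h + 1)
    push_cast at this; exact this
  have hnz : ∀ m : ℕ, 0 < m → m < 2 * h + 1 → (m : ZMod (2 * h + 1)) ≠ 0 := by
    intro m h0 h1 h2
    rw [ZMod.natCast_eq_zero_iff] at h2
    exact absurd (Nat.le_of_dvd h0 h2) (by omega)
  have hinj : ∀ m m' : ℕ, m < 2 * h + 1 → m' < 2 * h + 1 →
      (m : ZMod (2 * h + 1)) = m' → m = m' := by
    intro m m' h1 h2 h3
    rw [ZMod.natCast_eq_natCast_iff', Nat.mod_eq_of_lt h1, Nat.mod_eq_of_lt h2] at h3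
    exact h3
  have hc0 : Fin h → (h : ZMod (2 * h + 1)) ≠ 0 := fun c => hnz h (by have := c.2; omega) (by omega)
  have hc1 : Fin h → (1 : ZMod (2 * h + 1)) ≠ 0 := fun c => by
    have := hnz 1 (by omega) (by have := c.2; omega)
    simpa using this
  have hcinj : ∀ c c' : Fin h, (c.val : ZMod (2 * h + 1)) = c'.val → c = c' := fun c c' hh =>
    Fin.ext (hinj _ _ (by omega) (by omega) hh)
  have hmate : ∀ (c : Fin h) (b b' : ZMod (2 * h + 1)),
      (b + b' = 2 * (c.val : ZMod (2 * h + 1)) ∨ b + b' = 2 * (c.val : ZMod (2 * h + 1)) + 1) →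
      b' ≠ -1 - b := by
    rintro c b b' hh rfl
    have h3 := c.2
    rcases hh with hh | hh
    · apply hnz (2 * c.val + 1) (by omega) (by omega)
      push_cast; linear_combination -hh
    · apply hnz (2 * c.val + 2) (by omega) (by omega)
      push_cast; linear_combination -hh
  refine framework (C := Fin h) hodd (fun b => -1 - b) (fun b => by ring) True (fun h => (h trivial).elim) ?_
    (SO n h) (flipO n h) ?_ ?_ ?_ ?_ ?_ ?_ ?_
  · simp [ZMod.card]
  · rintro c (a | ⟨b, t⟩) (a' | ⟨b', t'⟩) h
    · exact h
    · exact h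
    · exact h
    · simp only [SO] at h ⊢
      rcases h with ⟨h1, h2, h3⟩ | h | h
      · exact Or.inl ⟨h1.symm, h2.symm, by rw [add_comm b' b]; exact h3⟩
      · exact Or.inr (Or.inr h)
      · exact Or.inr (Or.inl h)
  · rintro c (a | ⟨b, t⟩) h
    · exact h.elim
    · exfalso
      simp only [SO] at h
      rcases h with ⟨-, h, -⟩ | ⟨-, -, h, -⟩ | ⟨-, -, h, -⟩
      · exact h rfl
      · exact h1n (by linear_combination -h)
      · exact h1n (by linear_combination -h)
  · have key : ∀ (c c' : Fin h) (a : Bool) (b : ZMod (2 * h + 1)) (t : ZMod n),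
        SO n h c (Sum.inl a) (Sum.inr (b, t)) → SO n h c' (Sum.inl a) (Sum.inr (b, t)) → c = c' := by
      intro c c' a b t h h'
      apply hcinj
      simp only [SO] at h h'
      rcases h with ⟨h1, h2⟩ | ⟨h1, h2⟩ <;> rcases h' with ⟨h1', h2'⟩ | ⟨h1', h2'⟩
      · exact h1.symm.trans h1'
      · exfalso; apply h1n
        cases a <;> simp only [if_true, if_false, Bool.false_eq_true] at h2 h2'
        · linear_combination h2' - h2
        · linear_combination h2' - h2
      · exfalso; apply h1n
        cases a <;> simp only [if_true, if_false, Bool.false_eq_true] at h2 h2'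
        · linear_combination h2 - h2'
        · linear_combination h2 - h2'
      · linear_combination h1' - h1
    rintro c c' (a | ⟨b, t⟩) (a' | ⟨b', t'⟩) h h'
    · exact h.elim
    · exact key c c' a b' t' h h'
    · exact key c c' a' b t h h'
    · simp only [SO] at h h'
      have h3 := c.2
      have h3' := c'.2
      rcases h with ⟨h1, h2, h3⟩ | ⟨h1, h2, h3, h4⟩ | ⟨h1, h2, h3, h4⟩ <;>
      rcases h' with ⟨h1', h2', h3'⟩ | ⟨h1', h2', h3', h4'⟩ | ⟨h1', h2', h3', h4'⟩
      · rcases h3 with h3 | h3 <;> rcases h3' with h3' | h3'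
        · have := hinj (2 * c.val) (2 * c'.val) (by omega) (by omega) (by push_cast; rw [← h3, h3'])
          exact Fin.ext (by omega)
        · have := hinj (2 * c.val) (2 * c'.val + 1) (by omega) (by omega) (by push_cast; rw [← h3, h3'])
          omega
        · have := hinj (2 * c.val + 1) (2 * c'.val) (by omega) (by omega) (by push_cast; rw [← h3, h3'])
          omega
        · have := hinj (2 * c.val + 1) (2 * c'.val + 1) (by omega) (by omega) (by push_cast; rw [← h3, h3'])
          exact Fin.ext (by omega)
      · exact (h1n (by linear_combination -h3' - h1)).elim
      · exact (h1n (by linear_combination -h3' + h1)).elim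
      · exact (h1n (by linear_combination -h3 - h1')).elim
      · exact hcinj _ _ (h2.symm.trans h2')
      · exact (h2n (by linear_combination -h3 - h3')).elim
      · exact (h1n (by linear_combination -h3 + h1')).elim
      · exact (h2n (by linear_combination -h3 - h3')).elim
      · exact hcinj _ _ (h2.symm.trans h2')
  · rintro (a | ⟨b, t⟩) (a' | ⟨b', t'⟩) hF <;> simp only [isF] at hF
    obtain ⟨rfl, h1, h2⟩ := hF
    have hs : (b + b').val < 2 * h + 1 := ZMod.val_lt _
    have hs' : (((b + b').val : ℕ) : ZMod (2 * h + 1)) = b + b' := ZMod.natCast_zmod_val _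
    have hs2 : (b + b').val ≠ 2 * h := by
      intro h3
      rw [h3] at hs'
      push_cast at hs'
      apply h2
      linear_combination hk - hs'
    refine ⟨⟨(b + b').val / 2, by omega⟩, Or.inl ⟨rfl, fun h => h1 h, ?_⟩⟩
    simp only
    rcases Nat.mod_two_eq_zero_or_one (b + b').val with h3 | h3
    · left
      have : (b + b').val = 2 * ((b + b').val / 2) := by omega
      have := congrArg (Nat.cast (R := ZMod (2 * h + 1))) this
      push_cast at this ⊢
      exact hs'.symm.trans this
    · right
      have : (b + b').val = 2 * ((b + b').val / 2) + 1 := by omega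
      have := congrArg (Nat.cast (R := ZMod (2 * h + 1))) this
      push_cast at this ⊢
      exact hs'.symm.trans this
  · rintro c (a | ⟨b, t⟩) (a' | ⟨b', t'⟩) hh hF <;> simp only [isF] at hF
    simp only [flipO]
    obtain ⟨rfl, h1, h2⟩ := hF
    have hs : b + b' = 2 * (c.val : ZMod (2 * h + 1)) ∨ b + b' = 2 * (c.val : ZMod (2 * h + 1)) + 1 := by
      simp only [SO] at hh
      rcases hh with ⟨-, -, h3⟩ | ⟨-, -, h, -⟩ | ⟨-, -, h, -⟩
      · exact h3
      · exact (h1n (by linear_combination -h)).elim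
      · exact (h1n (by linear_combination -h)).elim
    set q : ZMod (2 * h + 1) := (c.val : ZMod (2 * h + 1)) with hq
    have l1 : (b - q).val < 2 * h + 1 := ZMod.val_lt _
    have l2 : (b' - q).val < 2 * h + 1 := ZMod.val_lt _
    have l3 : (((b - q).val : ℕ) : ZMod (2 * h + 1)) = b - q := ZMod.natCast_zmod_val _
    have l4 : (((b' - q).val : ℕ) : ZMod (2 * h + 1)) = b' - q := ZMod.natCast_zmod_val _
    have hne : (b - q).val ≠ (b' - q).val := fun h => h1 (by
      have := ZMod.val_injective _ h
      linear_combination this)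
    have hc := c.2
    rcases hs with hs | hs
    · have : (2 * h + 1) ∣ (b - q).val + (b' - q).val := by
        rw [← ZMod.natCast_eq_zero_iff]
        push_cast
        rw [l3, l4]; linear_combination hs
      obtain ⟨m, hm⟩ := this
      have : m < 2 := by nlinarith
      interval_cases m <;> omega
    · have : (2 * h + 1) ∣ (b - q).val + (b' - q).val + 2 * h := by
        rw [← ZMod.natCast_eq_zero_iff]
        push_cast
        rw [l3, l4]; linear_combination hs + hk
      obtain ⟨m, hm⟩ := this
      have : m < 3 := by nlinarith
      interval_cases m <;> omega
  · have hv0 : ∀ c : Fin h, ¬ flipO n h c (Sum.inr ((c.val : ZMod (2 * h + 1)), 0)) := by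
      intro c; simp [flipO]
    have hv1 : ∀ c : Fin h, ¬ (((c.val : ZMod (2 * h + 1)) - h) - (c.val : ZMod (2 * h + 1))).val ≤ h := by
      intro c hle
      have hc := c.2
      have : ((c.val : ZMod (2 * h + 1)) - h) - (c.val : ZMod (2 * h + 1)) = ((h + 1 : ℕ) : ZMod (2 * h + 1)) := by
        push_cast; linear_combination -hk
      rw [this, ZMod.val_natCast_of_lt (by omega)] at hle
      omega
    rintro c (a | ⟨b, t⟩) (a' | ⟨b', t'⟩) hh hF _
    · simp [flipO]
    · simp [flipO]
    · simp only [SO] at hh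
      simp only [flipO]
      rcases hh with ⟨h1, -⟩ | ⟨h1, -⟩
      · rw [h1]; simp
      · rw [h1]; exact fun h => hv1 c h.2
    · simp only [SO] at hh
      simp only [flipO]
      rcases hh with ⟨h1, h2, h3⟩ | ⟨h1, -⟩ | ⟨-, h1, -⟩
      · exact (hF ⟨h1, h2, hmate c b b' h3⟩).elim
      · rw [h1]; exact fun h => hv1 c h.2
      · rw [h1]; simp
  · intro c
    have hH := hc0 c
    have h1k := hc1 c
    suffices hpair : ∀ i, ∃ x y, x ≠ y ∧ ∀ i', SO n h c i i' ↔ i' = x ∨ i' = y by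
      intro i
      obtain ⟨x, y, hxy, hi⟩ := hpair i
      have : {i' | SO n h c i i'} = {x, y} := by ext i'; exact hi i'
      rw [this, Set.ncard_pair hxy]
    set q : ZMod (2 * h + 1) := (c.val : ZMod (2 * h + 1)) with hq
    have hqH : q ≠ q - h := fun hh => hH (by linear_combination hh)
    rintro (a | ⟨b, t⟩)
    · refine ⟨Sum.inr (q, if a then 2 else 1), Sum.inr (q - h, if a then 1 else 0), ?_, ?_⟩
      · intro hh
        simp only [Sum.inr.injEq, Prod.mk.injEq] at hh
        exact hqH hh.1
      · rintro (a' | ⟨b', t'⟩)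
        · simp [SO]
        · simp only [SO, Sum.inr.injEq, Prod.mk.injEq, ← hq]
    · by_cases hb : b = q
      · subst hb
        refine ⟨Sum.inr (q + 1, t), if t = 1 then Sum.inl false else if t = 2 then Sum.inl true else
          Sum.inr (q - h, t - 1), ?_, ?_⟩
        · split_ifs
          · simp
          · simp
          · simp only [ne_eq, Sum.inr.injEq, Prod.mk.injEq]
            rintro ⟨-, hh⟩
            exact h1n (by linear_combination hh)
        · have h12 : ¬ (t = 1 ∧ t = 2) := fun hh => h1n (by linear_combination hh.1 - hh.2)
          rintro (a' | ⟨b', t'⟩)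
          · simp only [SO, ← hq, eq_false hqH, true_and, false_and, or_false, reduceCtorEq, false_or]
            by_cases h1 : t = 1 <;> by_cases h2 : t = 2
            · exact (h12 ⟨h1, h2⟩).elim
            all_goals
              first
              | replace h1 := eq_false h1
              | replace h1 := eq_true h1
              first
              | replace h2 := eq_false h2
              | replace h2 := eq_true h2
              cases a' <;> simp [h1, h2]
          · have e1 : (q ≠ b' ∧ (q + b' = 2 * q ∨ q + b' = 2 * q + 1)) ↔ b' = q + 1 := by
              constructor
              · rintro ⟨h1, h2 | h2⟩
                · exact (h1 (by linear_combination -h2)).elim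
                · linear_combination h2
              · rintro rfl
                exact ⟨fun hh => h1k (by linear_combination -hh), Or.inr (by ring)⟩
            have e2 : (t = t' + 1 ∧ t' ≠ 0 ∧ t' ≠ 1) ↔ t' = t - 1 ∧ t ≠ 1 ∧ t ≠ 2 := by
              constructor
              · rintro ⟨rfl, h1, h2⟩
                exact ⟨by ring, fun hh => h1 (by linear_combination hh),
                  fun hh => h2 (by linear_combination hh)⟩
              · rintro ⟨rfl, h1, h2⟩
                exact ⟨by ring, fun hh => h1 (by linear_combination hh),
                  fun hh => h2 (by linear_combination hh)⟩
            simp only [SO, ← hq, eq_false hqH, true_and, false_and, false_or, e1, e2]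
            rw [eq_comm (a := t)]
            by_cases h1 : t = 1 <;> by_cases h2 : t = 2
            · exact (h12 ⟨h1, h2⟩).elim
            all_goals
              first
              | replace h1 := eq_false h1
              | replace h1 := eq_true h1
              first
              | replace h2 := eq_false h2
              | replace h2 := eq_true h2
              simp only [h1, h2, if_true, if_false, reduceCtorEq, Sum.inr.injEq, Prod.mk.injEq, ne_eq, not_true_eq_false,
                not_false_eq_true, and_false, false_and, and_true, true_and, or_false, and_comm]
      · by_cases hb' : b = q - h
        · have hqb : q = b + h := by linear_combination -hb'
          refine ⟨Sum.inr (q + h, t), if t = 0 then Sum.inl false else if t = 1 then Sum.inl true else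
            Sum.inr (q, t + 1), ?_, ?_⟩
          · split_ifs
            · simp
            · simp
            · simp only [ne_eq, Sum.inr.injEq, Prod.mk.injEq]
              rintro ⟨-, hh⟩
              exact h1n (by linear_combination -hh)
          · have h12 : ¬ (t = 0 ∧ t = 1) := fun hh => h1n (by linear_combination hh.1 - hh.2)
            rintro (a' | ⟨b', t'⟩)
            · simp only [SO, ← hq, eq_false hb, eq_true hb', true_and, false_and, reduceCtorEq, false_or]
              by_cases h1 : t = 0 <;> by_cases h2 : t = 1
              · exact (h12 ⟨h1, h2⟩).elim
              all_goals
                first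
                | replace h1 := eq_false h1
                | replace h1 := eq_true h1
                first
                | replace h2 := eq_false h2
                | replace h2 := eq_true h2
                cases a' <;> simp [h1, h2]
            · have e1 : (b ≠ b' ∧ (b + b' = 2 * q ∨ b + b' = 2 * q + 1)) ↔ b' = q + h := by
                constructor
                · rintro ⟨h1, h2 | h2⟩
                  · linear_combination h2 - hb'
                  · exact (h1 (by linear_combination 2 * hb' - h2 - hk)).elim
                · rintro rfl
                  exact ⟨fun hh => h1k (by linear_combination hk + hh - hb'), Or.inl (by linear_combination hb')⟩
              simp only [SO, ← hq, eq_false hb, eq_true hb', true_and, false_and, and_false, or_false, e1]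
              rw [eq_comm (a := t)]
              by_cases h1 : t = 0 <;> by_cases h2 : t = 1
              · exact (h12 ⟨h1, h2⟩).elim
              all_goals
                first
                | replace h1 := eq_false h1
                | replace h1 := eq_true h1
                first
                | replace h2 := eq_false h2
                | replace h2 := eq_true h2
                simp only [h1, h2, if_true, if_false, reduceCtorEq, Sum.inr.injEq, Prod.mk.injEq, ne_eq, not_true_eq_false,
                  not_false_eq_true, and_false, false_and, and_true, true_and, or_false, and_comm]
        · refine ⟨Sum.inr (2 * q - b, t), Sum.inr (2 * q + 1 - b, t), ?_, ?_⟩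
          · simp only [ne_eq, Sum.inr.injEq, Prod.mk.injEq]
            rintro ⟨hh, -⟩
            exact h1k (by linear_combination -hh)
          · rintro (a' | ⟨b', t'⟩)
            · simp only [SO, ← hq, eq_false hb, eq_false hb', false_and, reduceCtorEq, or_false]
            · have e1 : (b ≠ b' ∧ (b + b' = 2 * q ∨ b + b' = 2 * q + 1)) ↔
                  (b' = 2 * q - b ∨ b' = 2 * q + 1 - b) := by
                constructor
                · rintro ⟨h1, h2 | h2⟩
                  · left; linear_combination h2
                  · right; linear_combination h2
                · rintro (rfl | rfl)
                  · refine ⟨fun hh => hb ?_, Or.inl (by ring)⟩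
                    linear_combination (b - q) * hk - h * hh
                  · refine ⟨fun hh => hb' ?_, Or.inr (by ring)⟩
                    linear_combination (b - q) * hk - h * hh
              simp only [SO, ← hq, eq_false hb, eq_false hb', false_and, and_false, or_false, e1,
                Sum.inr.injEq, Prod.mk.injEq]
              rw [eq_comm (a := t)]
              tauto

theorem sufficiency {n v : ℕ} {T : Type} [Fintype T] (hT : HasCol n T) (hc : Fintype.card T = v)
    (hn : 1 < n) (hv : 2 < v) : ∃ s : ℕ, 0 < s ∧ IsURD n v 1 s := by
  obtain ⟨s, hs⟩ := (HasCol.congr (Fintype.equivFinOfCardEq hc).symm hT).urd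
  refine ⟨s, ?_, hs⟩
  have h := (IsURD.count (by omega) hs).1
  rcases Nat.eq_zero_or_pos s with rfl | h0
  · exfalso
    nlinarith
  · exact h0

/-- Main Theorem: for odd `n > 1`, a `(K_2, K_{1,n})`-URD`(v; 1, s)` exists for some
positive integer `s` if and only if `v ≡ 2(n+1) (mod n(n+1))`. -/
theorem main_theorem (n : ℕ) (hn : 1 < n) (hodd : Odd n) (v : ℕ) (hv : 0 < v) :
    (∃ s : ℕ, 0 < s ∧ IsURD n v 1 s) ↔ v ≡ 2 * (n + 1) [MOD n * (n + 1)] := by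
  constructor
  · rintro ⟨s, hs, h⟩
    exact necessity hv hs h
  · intro hmod
    classical
    have hNZ : NeZero n := ⟨by omega⟩
    have hn3 : 3 ≤ n := by
      obtain ⟨m, hm⟩ := hodd
      omega
    have hlt : 2 * (n + 1) < n * (n + 1) := by nlinarith
    obtain ⟨k, hk⟩ : ∃ k, v = (n + 1) * (2 + k * n) := by
      refine ⟨v / (n * (n + 1)), ?_⟩
      have h1 := Nat.div_add_mod v (n * (n + 1))
      rw [hmod, Nat.mod_eq_of_lt hlt] at h1
      rw [← h1]
      have : (n * (n + 1) * (v / (n * (n + 1))) + 2 * (n + 1)) / (n * (n + 1)) = v / (n * (n + 1)) := by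
        rw [h1]
      rw [this]
      ring
    have hv2 : 2 < v := by
      rw [hk]; nlinarith [Nat.zero_le (k * n)]
    rcases Nat.even_or_odd k with ⟨l, hl⟩ | ⟨h, hh⟩
    · rcases Nat.even_or_odd l with he | ho
      · have hL : Odd (l + 1) := he.add_one
        refine sufficiency (caseE hn hodd hL True) ?_ hn hv2
        have hX : Fintype.card (XT (l + 1) True) = l := by
          have : Fintype.card {x : ZMod (l + 1) // x ≠ 0} = l := by
            rw [Fintype.card_subtype_compl, ZMod.card, Fintype.card_subtype_eq]; rfl
          refine Eq.trans (Fintype.card_congr (Equiv.subtypeEquivRight (fun x => ⟨fun h => h trivial, fun h _ => h⟩))) this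
        simp only [Fintype.card_prod, Fintype.card_fin, Fintype.card_sum, Fintype.card_bool, ZMod.card]
        rw [hX, hk, hl]; ring
      · have hNL : NeZero l := ⟨by rintro rfl; simp at ho⟩
        refine sufficiency (caseE hn hodd ho False) ?_ hn hv2
        have hX : Fintype.card (XT l False) = l := by
          conv_rhs => rw [← ZMod.card l]
          exact Fintype.card_congr (Equiv.subtypeUnivEquiv (by simp))
        simp only [Fintype.card_prod, Fintype.card_fin, Fintype.card_sum, Fintype.card_bool, ZMod.card]
        rw [hX, hk, hl]; ring
    · refine sufficiency (caseO (h := h) hn hodd) ?_ hn hv2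
      simp only [Fintype.card_prod, Fintype.card_fin, Fintype.card_sum, Fintype.card_bool, ZMod.card]
      rw [hk, hh]
end

section
/- Let n = 2q+1 > 1 be odd, let k ≥ q+1 be an integer, let g = 2nk+n+2, and let μ = (2nk+n+1)/2. There exists an almost n-star factor on Z_g admitting an admissible pure/prime labeling such that: every difference d ∈ {1,…,μ} is realized by its pure edge, which is a forward edge; every difference d ∈ {1,…,μ} is realized by at most two edges of the factor; exactly one star is a mixed star, and it has q+1 pure edges and q prime edges, all of whose prime edges are forward edges; and the little star has t−1 leaves, where t is the unique integer with 0 ≤ t ≤ n and t ≡ g (mod n+1). -/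
/-- The "span" of an edge on `Z_g = {0, 1, …, g-1}`: for `e = {u, v}` with `u < v`,
this is `v - u`. -/
def pairSpan (g : ℕ) : Sym2 (Fin g) → ℕ :=
  Sym2.lift ⟨fun u v => max u.val v.val - min u.val v.val, by
    intro u v
    simp [Nat.max_comm, Nat.min_comm]⟩

/-- The difference (length) of an edge `e = {u, v}` with `u < v` on `Z_g`:
`D(e) = min (v - u) (g - (v - u))`. -/
def pairDiff (g : ℕ) (e : Sym2 (Fin g)) : ℕ :=
  min (pairSpan g e) (g - pairSpan g e)

/-- `e = {u, v}` with `u < v` is a forward edge when `D(e) = v - u`. -/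
def IsForwardEdge (g : ℕ) (e : Sym2 (Fin g)) : Prop :=
  pairDiff g e = pairSpan g e

/-- `e = {u, v}` with `u < v` is a backward (wrap-around) edge when
`D(e) = g - (v - u)`. -/
def IsBackwardEdge (g : ℕ) (e : Sym2 (Fin g)) : Prop :=
  pairDiff g e = g - pairSpan g e

instance (g : ℕ) : DecidablePred (IsForwardEdge g) :=
  fun e => inferInstanceAs (Decidable (pairDiff g e = pairSpan g e))

instance (g : ℕ) : DecidablePred (IsBackwardEdge g) :=
  fun e => inferInstanceAs (Decidable (pairDiff g e = g - pairSpan g e))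

/-- The edge set of a collection of stars, each given by a center and a leaf set. -/
def factorEdges (g : ℕ) (P : Finset (Fin g × Finset (Fin g))) : Finset (Sym2 (Fin g)) :=
  P.biUnion starEdgeSet

/-- An almost `n`-star factor on `Z_g` (with parameter `t ≡ g (mod n+1)`, `0 ≤ t ≤ n`):
a collection of vertex-disjoint stars whose vertex sets partition `Z_g`, all of which
are `n`-stars except, when `t ≥ 1`, for one little star with `t - 1` leaves. -/
def IsAlmostStarFactor (n g t : ℕ) (P : Finset (Fin g × Finset (Fin g))) : Prop :=
  (∀ p ∈ P, p.1 ∉ p.2) ∧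
  (∀ x : Fin g, ∃! p, p ∈ P ∧ (x = p.1 ∨ x ∈ p.2)) ∧
  (if t = 0 then ∀ p ∈ P, p.2.card = n
   else ∃ L ∈ P, L.2.card = t - 1 ∧ ∀ p ∈ P, p ≠ L → p.2.card = n)

/-- An admissible pure/prime labeling of the edge set `E` of an almost star factor,
given by the subset `Pure ⊆ E` of pure edges (the rest are prime): every difference
realized by `E` is realized by exactly one pure edge and at most one prime edge. -/
def IsAdmissibleLabeling (g : ℕ) (E Pure : Finset (Sym2 (Fin g))) : Prop :=
  Pure ⊆ E ∧
  ∀ d : ℕ, (∃ e ∈ E, pairDiff g e = d) →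
    (Pure.filter (fun e => pairDiff g e = d)).card = 1 ∧
    ((E \ Pure).filter (fun e => pairDiff g e = d)).card ≤ 1

/-- A star is mixed (w.r.t. the set `Pure` of pure edges) if it contains both a pure
edge and a prime edge. -/
def IsMixedStar (g : ℕ) (Pure : Finset (Sym2 (Fin g)))
    (p : Fin g × Finset (Fin g)) : Prop :=
  (starEdgeSet p ∩ Pure).Nonempty ∧ (starEdgeSet p \ Pure).Nonempty

def spn (f : ℕ → ℕ) (x : ℕ) : ℕ := max (f x) x - min (f x) x

def dff (g : ℕ) (f : ℕ → ℕ) (x : ℕ) : ℕ := min (spn f x) (g - spn f x)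

lemma card_fin_filter (g : ℕ) (p : ℕ → Prop) [DecidablePred p] :
    ((Finset.univ : Finset (Fin g)).filter (fun x => p x.val)).card
      = ((Finset.range g).filter p).card := by
  rw [← Finset.card_map Fin.valEmbedding]
  congr 1
  ext x
  simp only [Finset.mem_map, Finset.mem_filter, Finset.mem_univ, true_and, Fin.valEmbedding_apply,
    Finset.mem_range]
  constructor
  · rintro ⟨y, hy, rfl⟩
    exact ⟨y.2, hy⟩
  · rintro ⟨h1, h2⟩
    exact ⟨⟨x, h1⟩, h2, rfl⟩

theorem framework_s6 (n q g μ t a m : ℕ) (f : ℕ → ℕ) (pur : ℕ → Prop) [DecidablePred pur]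
    (hg : g = 2 * μ + 1) (hq : 1 ≤ q) (ht : t ≠ 0)
    (hlt : ∀ x < g, f x < g) (hid : ∀ x < g, f (f x) = f x)
    (ha : a < g) (hfa : f a = a)
    (hca : ((Finset.range g).filter (fun x => f x ≠ x ∧ f x = a)).card = t - 1)
    (hc : ∀ c < g, f c = c → c ≠ a →
      ((Finset.range g).filter (fun x => f x ≠ x ∧ f x = c)).card = n)
    (hpi : ∀ x < g, ∀ y < g, f x ≠ x → f y ≠ y → pur x → pur y → dff g f x = dff g f y → x = y)
    (hri : ∀ x < g, ∀ y < g, f x ≠ x → f y ≠ y → ¬ pur x → ¬ pur y →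
      dff g f x = dff g f y → x = y)
    (hps : ∀ d, 1 ≤ d → d ≤ μ → ∃ x < g, f x ≠ x ∧ pur x ∧ spn f x = d)
    (hm : m < g) (hfm : f m = m)
    (hmp : ((Finset.range g).filter (fun x => (f x ≠ x ∧ f x = m) ∧ pur x)).card = q + 1)
    (hmr : ((Finset.range g).filter (fun x => (f x ≠ x ∧ f x = m) ∧ ¬ pur x)).card = q)
    (hmf : ∀ x < g, f x = m → ¬ pur x → spn f x ≤ μ)
    (hmix : ∀ x < g, ∀ y < g, f x ≠ x → f y ≠ y → pur x → ¬ pur y → f x = f y → f x = m) :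
    ∃ (P : Finset (Fin g × Finset (Fin g))) (Pure : Finset (Sym2 (Fin g))),
      IsAlmostStarFactor n g t P ∧
      IsAdmissibleLabeling g (factorEdges g P) Pure ∧
      (∀ d, 1 ≤ d → d ≤ μ → ∃ e ∈ Pure, pairDiff g e = d ∧ IsForwardEdge g e) ∧
      (∀ d, 1 ≤ d → d ≤ μ →
        ((factorEdges g P).filter (fun e => pairDiff g e = d)).card ≤ 2) ∧
      (∃! p, p ∈ P ∧ IsMixedStar g Pure p) ∧
      (∀ p ∈ P, IsMixedStar g Pure p →
        (starEdgeSet p ∩ Pure).card = q + 1 ∧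
        (starEdgeSet p \ Pure).card = q ∧
        (∀ e ∈ starEdgeSet p \ Pure, IsForwardEdge g e)) := by
  classical
  let F : Fin g → Fin g := fun x => ⟨f x, hlt x x.2⟩
  have hFF : ∀ x, F (F x) = F x := fun x => Fin.ext (hid x x.2)
  have hFne : ∀ x, F x ≠ x ↔ f x ≠ x := fun x => by simp [F, Fin.ext_iff]
  let e : Fin g → Sym2 (Fin g) := fun x => s(F x, x)
  have hsp : ∀ x, pairSpan g (e x) = spn f x := fun x => rfl
  have hdf : ∀ x, pairDiff g (e x) = dff g f x := fun x => rfl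
  have hinj : ∀ x y, F x ≠ x → F y ≠ y → e x = e y → x = y := by
    intro x y hx hy h
    simp only [e, Sym2.eq_iff] at h
    rcases h with h | h
    · exact h.2
    · exfalso
      apply hx
      rw [h.2, hFF]
  have hrange : ∀ x : Fin g, F x ≠ x → 1 ≤ dff g f x ∧ dff g f x ≤ μ := by
    intro x hx
    rw [hFne] at hx
    have h1 := hlt x x.2
    have h2 := x.2
    unfold dff spn
    omega
  let lv : Fin g → Finset (Fin g) := fun c => Finset.univ.filter (fun x => F x ≠ x ∧ F x = c)
  let star : Fin g → Fin g × Finset (Fin g) := fun c => (c, lv c)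
  let C : Finset (Fin g) := Finset.univ.filter (fun c => F c = c)
  let P := C.image star
  let Pure := (Finset.univ.filter (fun x : Fin g => F x ≠ x ∧ pur x)).image e
  have hP : ∀ p, p ∈ P ↔ ∃ c, F c = c ∧ star c = p := by
    intro p; simp [P, C]
  have hse : ∀ c, starEdgeSet (star c) = (lv c).image e := by
    intro c
    ext s
    simp only [starEdgeSet, star, lv, Finset.mem_image, Finset.mem_filter, Finset.mem_univ,
      true_and, e]
    constructor
    · rintro ⟨x, ⟨h1, h2⟩, h3⟩; exact ⟨x, ⟨h1, h2⟩, by rw [h2]; exact h3⟩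
    · rintro ⟨x, ⟨h1, h2⟩, h3⟩; exact ⟨x, ⟨h1, h2⟩, by rw [h2] at h3; exact h3⟩
  have hE : ∀ s, s ∈ factorEdges g P ↔ ∃ x, F x ≠ x ∧ e x = s := by
    intro s
    simp only [factorEdges, Finset.mem_biUnion, hP]
    constructor
    · rintro ⟨p, ⟨c, hc, rfl⟩, h⟩
      rw [hse] at h
      simp only [lv, Finset.mem_image, Finset.mem_filter, Finset.mem_univ, true_and] at h
      obtain ⟨x, ⟨h1, h2⟩, h3⟩ := h
      exact ⟨x, h1, h3⟩
    · rintro ⟨x, h1, h2⟩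
      refine ⟨_, ⟨F x, hFF x, rfl⟩, ?_⟩
      rw [hse]
      simp only [lv, Finset.mem_image, Finset.mem_filter, Finset.mem_univ, true_and]
      exact ⟨x, ⟨h1, rfl⟩, h2⟩
  have hPure : ∀ s, s ∈ Pure ↔ ∃ x, (F x ≠ x ∧ pur x) ∧ e x = s := by
    intro s; simp [Pure]
  have hPe : ∀ x, F x ≠ x → (e x ∈ Pure ↔ pur x) := by
    intro x hx
    rw [hPure]
    constructor
    · rintro ⟨y, ⟨h1, h2⟩, h3⟩
      rw [← hinj _ _ h1 hx h3]; exact h2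
    · intro h; exact ⟨x, ⟨hx, h⟩, rfl⟩
  have hPc : ∀ d, (Pure.filter (fun e => pairDiff g e = d)).card ≤ 1 := by
    intro d
    rw [Finset.card_le_one]
    intro s hs s' hs'
    rw [Finset.mem_filter, hPure] at hs hs'
    obtain ⟨⟨x, ⟨h1, h2⟩, rfl⟩, h3⟩ := hs
    obtain ⟨⟨y, ⟨h4, h5⟩, rfl⟩, h6⟩ := hs'
    rw [hdf] at h3 h6
    congr 1
    exact Fin.ext (hpi x x.2 y y.2 ((hFne x).1 h1) ((hFne y).1 h4) h2 h5 (h3.trans h6.symm))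
  have hRc : ∀ d, ((factorEdges g P \ Pure).filter (fun e => pairDiff g e = d)).card ≤ 1 := by
    intro d
    rw [Finset.card_le_one]
    intro s hs s' hs'
    rw [Finset.mem_filter, Finset.mem_sdiff, hE] at hs hs'
    obtain ⟨⟨⟨x, h1, rfl⟩, h2⟩, h3⟩ := hs
    obtain ⟨⟨⟨y, h4, rfl⟩, h5⟩, h6⟩ := hs'
    rw [hdf] at h3 h6
    rw [hPe _ h1] at h2
    rw [hPe _ h4] at h5
    congr 1
    exact Fin.ext (hri x x.2 y y.2 ((hFne x).1 h1) ((hFne y).1 h4) h2 h5 (h3.trans h6.symm))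
  have hfw : ∀ x : Fin g, spn f x ≤ μ → pairDiff g (e x) = spn f x ∧ IsForwardEdge g (e x) := by
    intro x hx
    have : dff g f x = spn f x := by unfold dff; omega
    exact ⟨by rw [hdf, this], by unfold IsForwardEdge; rw [hdf, hsp, this]⟩
  have hsurj : ∀ d, 1 ≤ d → d ≤ μ → ∃ e ∈ Pure, pairDiff g e = d ∧ IsForwardEdge g e := by
    intro d h1 h2
    obtain ⟨x, hx, h3, h4, h5⟩ := hps d h1 h2
    refine ⟨e ⟨x, hx⟩, (hPe _ ((hFne _).2 h3)).2 h4, ?_⟩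
    have := hfw ⟨x, hx⟩ (by simpa [h5] using h2)
    simpa [h5] using this
  have hsub : Pure ⊆ factorEdges g P := by
    intro s hs
    rw [hPure] at hs
    obtain ⟨x, ⟨h1, h2⟩, h3⟩ := hs
    exact (hE s).2 ⟨x, h1, h3⟩
  have hlc : ∀ c : Fin g, (lv c).card =
      ((Finset.range g).filter (fun x => f x ≠ x ∧ f x = c)).card := by
    intro c
    rw [← card_fin_filter]
    simp only [lv, F, Fin.ext_iff, ne_eq]
  have hip : ∀ c, starEdgeSet (star c) ∩ Pure = ((lv c).filter (fun x => pur x.val)).image e := by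
    intro c
    rw [hse]
    ext s
    simp only [Finset.mem_inter, Finset.mem_image, Finset.mem_filter]
    constructor
    · rintro ⟨⟨x, h1, rfl⟩, h2⟩
      rw [hPe x (by simp [lv] at h1; exact h1.1)] at h2
      exact ⟨x, ⟨h1, h2⟩, rfl⟩
    · rintro ⟨x, ⟨h1, h2⟩, rfl⟩
      refine ⟨⟨x, h1, rfl⟩, ?_⟩
      rw [hPe x (by simp [lv] at h1; exact h1.1)]
      exact h2
  have hir : ∀ c, starEdgeSet (star c) \ Pure = ((lv c).filter (fun x => ¬ pur x.val)).image e := by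
    intro c
    rw [hse]
    ext s
    simp only [Finset.mem_sdiff, Finset.mem_image, Finset.mem_filter]
    constructor
    · rintro ⟨⟨x, h1, rfl⟩, h2⟩
      rw [hPe x (by simp [lv] at h1; exact h1.1)] at h2
      exact ⟨x, ⟨h1, h2⟩, rfl⟩
    · rintro ⟨x, ⟨h1, h2⟩, rfl⟩
      refine ⟨⟨x, h1, rfl⟩, ?_⟩
      rw [hPe x (by simp [lv] at h1; exact h1.1)]
      exact h2
  have hlvm : ∀ c x, x ∈ lv c → F x ≠ x ∧ F x = c := by
    intro c x h; simpa [lv] using h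
  let M : Fin g := ⟨m, hm⟩
  have hcp : (starEdgeSet (star M) ∩ Pure).card = q + 1 := by
    rw [hip, Finset.card_image_of_injOn, ← hmp, ← card_fin_filter]
    · simp only [lv, F, Fin.ext_iff, ne_eq, M, Finset.filter_filter]
    · intro x hx y hy h
      simp only [Finset.coe_filter, Set.mem_ofPred_eq] at hx hy
      exact hinj x y (hlvm _ _ hx.1).1 (hlvm _ _ hy.1).1 h
  have hcr : (starEdgeSet (star M) \ Pure).card = q := by
    rw [hir, Finset.card_image_of_injOn, ← hmr, ← card_fin_filter]
    · simp only [lv, F, Fin.ext_iff, ne_eq, M, Finset.filter_filter]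
    · intro x hx y hy h
      simp only [Finset.coe_filter, Set.mem_ofPred_eq] at hx hy
      exact hinj x y (hlvm _ _ hx.1).1 (hlvm _ _ hy.1).1 h
  have hMm : ∀ c, IsMixedStar g Pure (star c) → c = M := by
    rintro c ⟨⟨s, h1⟩, ⟨s', h2⟩⟩
    rw [hip] at h1
    rw [hir] at h2
    simp only [Finset.mem_image, Finset.mem_filter] at h1 h2
    obtain ⟨x, ⟨h3, h4⟩, -⟩ := h1
    obtain ⟨y, ⟨h5, h6⟩, -⟩ := h2
    obtain ⟨h7, h8⟩ := hlvm _ _ h3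
    obtain ⟨h9, h10⟩ := hlvm _ _ h5
    have h11 : f x = c := congrArg Fin.val h8
    have h12 : f y = c := congrArg Fin.val h10
    have := hmix x x.2 y y.2 ((hFne x).1 h7) ((hFne y).1 h9) h4 h6 (h11.trans h12.symm)
    exact Fin.ext (h11.symm.trans this)
  refine ⟨P, Pure, ⟨?_, ?_, ?_⟩, ⟨hsub, ?_⟩, hsurj, ?_, ?_, ?_⟩
  · intro p hp
    obtain ⟨c, hc, rfl⟩ := (hP p).1 hp
    simp only [star, lv, Finset.mem_filter, Finset.mem_univ, true_and]
    tauto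
  · intro x
    refine ⟨star (F x), ⟨(hP _).2 ⟨F x, hFF x, rfl⟩, ?_⟩, ?_⟩
    · simp only [star, lv, Finset.mem_filter, Finset.mem_univ, true_and]
      by_cases h : F x = x
      · exact Or.inl h.symm
      · exact Or.inr ⟨h, by trivial⟩
    · rintro p ⟨hp, h⟩
      obtain ⟨c, hc, rfl⟩ := (hP p).1 hp
      simp only [star, lv, Finset.mem_filter, Finset.mem_univ, true_and] at h
      rcases h with h | h
      · rw [h, hc]
      · rw [h.2]
  · rw [if_neg ht]
    refine ⟨star ⟨a, ha⟩, (hP _).2 ⟨_, Fin.ext hfa, rfl⟩, ?_, ?_⟩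
    · rw [← hca]; exact hlc _
    · intro p hp hne
      obtain ⟨c, hcc, rfl⟩ := (hP p).1 hp
      refine (hlc c).trans (hc c c.2 (congrArg Fin.val hcc) ?_)
      intro h
      apply hne
      congr 1
      exact Fin.ext h
  · rintro d ⟨s, hs, rfl⟩
    refine ⟨?_, hRc _⟩
    obtain ⟨x, h1, rfl⟩ := (hE s).1 hs
    apply le_antisymm (hPc _)
    rw [Nat.succ_le_iff, Finset.card_pos]
    obtain ⟨h2, h3⟩ := hrange x h1
    obtain ⟨e', h4, h5, -⟩ := hsurj _ h2 h3
    exact ⟨e', Finset.mem_filter.2 ⟨h4, h5⟩⟩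
  · intro d _ _
    have h := Finset.card_union_le (Pure.filter (fun e => pairDiff g e = d))
      ((factorEdges g P \ Pure).filter (fun e => pairDiff g e = d))
    rw [← Finset.filter_union, Finset.union_sdiff_of_subset hsub] at h
    have := hPc d
    have := hRc d
    omega
  · refine ⟨star M, ⟨(hP _).2 ⟨M, Fin.ext hfm, rfl⟩, ?_, ?_⟩, ?_⟩
    · rw [← Finset.card_pos, hcp]; omega
    · rw [← Finset.card_pos, hcr]; omega
    · rintro p ⟨hp, h⟩
      obtain ⟨c, hcc, rfl⟩ := (hP p).1 hp
      rw [hMm c h]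
  · intro p hp h
    obtain ⟨c, hcc, rfl⟩ := (hP p).1 hp
    obtain rfl := hMm c h
    refine ⟨hcp, hcr, ?_⟩
    intro s hs
    rw [hir] at hs
    simp only [Finset.mem_image, Finset.mem_filter] at hs
    obtain ⟨x, ⟨h3, h4⟩, rfl⟩ := hs
    exact (hfw x (hmf x x.2 (congrArg Fin.val (hlvm _ _ h3).2) h4)).2

/-- The assignment of each vertex to its star center. -/
def ff (n q k a τ r : ℕ) (x : ℕ) : ℕ :=
  if x ≤ a then x
  else if x ≤ a + q then a + q + k * n + 1
  else if x ≤ a + q + k * n then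
    (if (x - (a + q + 1)) % k < a then a - 1 - (x - (a + q + 1)) % k
      else a + 2 * q + k * n + 3 + (k - 1 - (x - (a + q + 1)) % k))
  else if x = a + q + k * n + 1 then x
  else if x ≤ a + 2 * q + k * n + 2 then a + q + k * n + 1
  else if x < k + k * n + 2 * q + 3 then x
  else if x < k + k * n + 2 * q + 3 + τ then a
  else if x < k + k * n + 2 * q + 3 + τ + r then x
  else k + k * n + 2 * q + 3 + τ + r - 1 - (x - (k + k * n + 2 * q + 3 + τ + r)) / n

/-- Relational description of `ff`. -/
inductive Cs (n q k a b τ r : ℕ) : ℕ → ℕ → Prop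
  | c1 (x : ℕ) (h : x < a) : Cs n q k a b τ r x x
  | c2 : Cs n q k a b τ r a a
  | c3 (u x : ℕ) (hu : u < q) (hx : x = a + 1 + u) : Cs n q k a b τ r x (a + q + k * n + 1)
  | c4 (i j x y : ℕ) (hi : i < a) (hj : j < n) (hkj : k * j + k ≤ k * n)
      (hx : x = a + q + 1 + i + k * j) (hy : y + i + 1 = a) : Cs n q k a b τ r x y
  | c5 (l j x y : ℕ) (hi : l < b) (hj : j < n) (hkj : k * j + k ≤ k * n)
      (hx : x + l + k * j = a + q + k * n) (hy : y = a + 2 * q + k * n + 3 + l) :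
      Cs n q k a b τ r x y
  | c6 (x : ℕ) (hx : x = a + q + k * n + 1) : Cs n q k a b τ r x x
  | c7 (u x y : ℕ) (hu : u < q + 1) (hx : x = a + q + k * n + 2 + u)
      (hy : y = a + q + k * n + 1) : Cs n q k a b τ r x y
  | c8 (l x : ℕ) (hl : l < b) (hx : x = a + 2 * q + k * n + 3 + l) : Cs n q k a b τ r x x
  | c9 (u x : ℕ) (hu : u < τ) (hx : x = k + k * n + 2 * q + 3 + u) : Cs n q k a b τ r x a
  | c10 (u x : ℕ) (hu : u < r) (hx : x = k + k * n + 2 * q + 3 + τ + u) : Cs n q k a b τ r x x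
  | c11 (v u x y : ℕ) (hv : v < r) (hu : u < n) (hnv : n * v + n ≤ n * r)
      (hx : x = k + k * n + 2 * q + 3 + τ + r + n * v + u)
      (hy : y + 1 + v = k + k * n + 2 * q + 3 + τ + r) : Cs n q k a b τ r x y

lemma mul_bd {k j n : ℕ} (h : j < n) : k * j + k ≤ k * n := by
  calc k * j + k = k * (j + 1) := by ring
    _ ≤ k * n := Nat.mul_le_mul_left k h

lemma divmod_uniq {k e e' j j' : ℕ} (he : e < k) (he' : e' < k)
    (h : e + k * j = e' + k * j') : e = e' ∧ j = j' := by
  have h1 : (e + k * j) % k = e := by rw [Nat.add_mul_mod_self_left, Nat.mod_eq_of_lt he]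
  have h2 : (e' + k * j') % k = e' := by rw [Nat.add_mul_mod_self_left, Nat.mod_eq_of_lt he']
  have h3 : e = e' := by rw [← h1, ← h2, h]
  refine ⟨h3, ?_⟩
  subst h3
  exact Nat.eq_of_mul_eq_mul_left (by omega : 0 < k) (by omega)

lemma Cs_of {n q k a b τ r x : ℕ} (hn : n = 2 * q + 1) (hk : k = a + b) (hk0 : 0 < k)
    (hx : x < k + k * n + 2 * q + 3 + τ + r + n * r) :
    Cs n q k a b τ r x (ff n q k a τ r x) := by
  unfold ff
  split_ifs with h1 h2 h3 h4 h5 h6 h7 h8 h9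
  · rcases Nat.lt_or_ge x a with h | h
    · exact .c1 x h
    · obtain rfl : x = a := by omega
      exact .c2
  · exact .c3 (x - (a + 1)) x (by omega) (by omega)
  · have hd := Nat.div_add_mod (x - (a + q + 1)) k
    have hj : (x - (a + q + 1)) / k < n := by
      rw [Nat.div_lt_iff_lt_mul hk0, mul_comm n k]; omega
    have := mul_bd (k := k) hj
    exact .c4 ((x - (a + q + 1)) % k) ((x - (a + q + 1)) / k) x _ h4 hj this (by omega) (by omega)
  · have hd := Nat.div_add_mod (x - (a + q + 1)) k
    have hm := Nat.mod_lt (x - (a + q + 1)) hk0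
    have hj : (x - (a + q + 1)) / k < n := by
      rw [Nat.div_lt_iff_lt_mul hk0, mul_comm n k]; omega
    have hj2 : n - 1 - (x - (a + q + 1)) / k < n := by
      generalize (x - (a + q + 1)) / k = J
      omega
    have := mul_bd (k := k) hj2
    have he : k * (n - 1 - (x - (a + q + 1)) / k) + k * ((x - (a + q + 1)) / k) + k = k * n := by
      have : n = (n - 1 - (x - (a + q + 1)) / k) + ((x - (a + q + 1)) / k) + 1 := by omega
      conv_rhs => rw [this]
      ring
    generalize n - 1 - (x - (a + q + 1)) / k = J at *
    exact .c5 (k - 1 - (x - (a + q + 1)) % k) J x _ (by omega) hj2 this (by omega) rfl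
  · exact .c6 x h5
  · exact .c7 (x - (a + q + k * n + 2)) x _ (by omega) (by omega) rfl
  · exact .c8 (x - (a + 2 * q + k * n + 3)) x (by omega) (by omega)
  · exact .c9 (x - (k + k * n + 2 * q + 3)) x (by omega) (by omega)
  · exact .c10 (x - (k + k * n + 2 * q + 3 + τ)) x (by omega) (by omega)
  · have hn0 : 0 < n := by omega
    have hd := Nat.div_add_mod (x - (k + k * n + 2 * q + 3 + τ + r)) n
    have hm := Nat.mod_lt (x - (k + k * n + 2 * q + 3 + τ + r)) hn0
    have hj : (x - (k + k * n + 2 * q + 3 + τ + r)) / n < r := by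
      rw [Nat.div_lt_iff_lt_mul hn0, mul_comm r n]; omega
    have := mul_bd (k := n) hj
    exact .c11 _ ((x - (k + k * n + 2 * q + 3 + τ + r)) % n) x _ hj hm this (by omega) (by omega)

lemma Cs_lt {n q k a b τ r x y : ℕ} (hn : n = 2 * q + 1) (hk : k = a + b)
    (h : Cs n q k a b τ r x y) :
    x < k + k * n + 2 * q + 3 + τ + r + n * r := by
  cases h <;> omega

lemma Cs_uniq {n q k a b τ r x y y' : ℕ} (hn : n = 2 * q + 1) (hk : k = a + b)
    (h : Cs n q k a b τ r x y) (h' : Cs n q k a b τ r x y') : y = y' := by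
  cases h with
  | c4 i j x y hi hj hkj hx hy =>
    cases h' with
    | c4 i' j' x y hi' hj' hkj' hx' hy' =>
      have := divmod_uniq (k := k) (e := i) (e' := i') (j := j) (j' := j')
        (by omega) (by omega) (by omega)
      omega
    | c5 l j' x y hi' hj' hkj' hx' hy' =>
      have he : k * (n - 1 - j') + k * j' + k = k * n := by
        have : n = (n - 1 - j') + j' + 1 := by omega
        conv_rhs => rw [this]
        ring
      have := divmod_uniq (k := k) (e := i) (e' := k - 1 - l) (j := j) (j' := n - 1 - j')
        (by omega) (by omega) (by omega)
      omega
    | _ => omega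
  | c5 l j x y hi hj hkj hx hy =>
    cases h' with
    | c5 l' j' x y hi' hj' hkj' hx' hy' =>
      have := divmod_uniq (k := k) (e := l) (e' := l') (j := j) (j' := j')
        (by omega) (by omega) (by omega)
      omega
    | c4 i j' x y hi' hj' hkj' hx' hy' =>
      have he : k * (n - 1 - j) + k * j + k = k * n := by
        have : n = (n - 1 - j) + j + 1 := by omega
        conv_rhs => rw [this]
        ring
      have := divmod_uniq (k := k) (e := i) (e' := k - 1 - l) (j := j') (j' := n - 1 - j)
        (by omega) (by omega) (by omega)
      omega
    | _ => omega
  | c11 v u x y hv hu hnv hx hy =>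
    cases h' with
    | c11 v' u' x y hv' hu' hnv' hx' hy' =>
      have := divmod_uniq (k := n) (e := u) (e' := u') (j := v) (j' := v')
        (by omega) (by omega) (by omega)
      omega
    | _ => omega
  | _ => cases h' <;> omega

lemma card_of_image (S : Finset ℕ) (N : ℕ) (φ : ℕ → ℕ)
    (hφ : ∀ u v, u < N → v < N → φ u = φ v → u = v)
    (h : ∀ x, x ∈ S ↔ ∃ u < N, φ u = x) : S.card = N := by
  have : S = (Finset.range N).image φ := by
    ext x; simp [h]
  rw [this, Finset.card_image_of_injOn, Finset.card_range]
  intro u hu v hv huv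
  simp only [Finset.coe_range, Set.mem_Iio] at hu hv
  exact hφ u v hu hv huv

/-- The pure leaves. -/
def pr (n q k a : ℕ) (x : ℕ) : Prop := a + q < x ∧ x ≤ a + 2 * q + k * n + 2

instance (n q k a : ℕ) : DecidablePred (pr n q k a) :=
  fun x => inferInstanceAs (Decidable (a + q < x ∧ x ≤ a + 2 * q + k * n + 2))

set_option maxHeartbeats 8000000 in
/-- Lemma 5 (k ≥ q+1): for odd `n = 2q+1 > 1`, `g = 2nk + n + 2` and
`μ = (2nk+n+1)/2`, there is an almost `n`-star factor on `Z_g` with an admissible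
pure/prime labeling such that every difference `d ∈ {1, …, μ}` is realized by its pure
edge, which is forward, and by at most two edges overall; there is exactly one mixed
star, having `q+1` pure edges and `q` prime edges, all of which are forward; and the
little star has `t-1` leaves. -/
theorem almost_factor_large_k (n q k : ℕ) (hq : n = 2 * q + 1) (hn : 1 < n)
    (hk : q + 1 ≤ k)
    (g : ℕ) (hg : g = 2 * n * k + n + 2)
    (μ : ℕ) (hμ : 2 * μ = 2 * n * k + n + 1)
    (t : ℕ) (ht1 : t ≤ n) (ht2 : t ≡ g [MOD n + 1]) :
    ∃ (P : Finset (Fin g × Finset (Fin g))) (Pure : Finset (Sym2 (Fin g))),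
      IsAlmostStarFactor n g t P ∧
      IsAdmissibleLabeling g (factorEdges g P) Pure ∧
      (∀ d, 1 ≤ d → d ≤ μ → ∃ e ∈ Pure, pairDiff g e = d ∧ IsForwardEdge g e) ∧
      (∀ d, 1 ≤ d → d ≤ μ →
        ((factorEdges g P).filter (fun e => pairDiff g e = d)).card ≤ 2) ∧
      (∃! p, p ∈ P ∧ IsMixedStar g Pure p) ∧
      (∀ p ∈ P, IsMixedStar g Pure p →
        (starEdgeSet p ∩ Pure).card = q + 1 ∧
        (starEdgeSet p \ Pure).card = q ∧
        (∀ e ∈ starEdgeSet p \ Pure, IsForwardEdge g e)) := by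
  have hq1 : 1 ≤ q := by omega
  have hk0 : 0 < k := by omega
  -- parity and quotient
  have hg2 : g = 2 * (k * n) + n + 2 := by rw [hg]; ring
  have hgq : g = 2 * q * k + 1 + (n + 1) * (k + 1) := by rw [hg, hq]; ring
  have hr : ∃ r τ, t = τ + 1 ∧ k * n = n * r + r + τ + k := by
    have h1 : t = g % (n + 1) := by
      have := ht2
      unfold Nat.ModEq at this
      rw [Nat.mod_eq_of_lt (by omega)] at this
      exact this
    rw [hgq, Nat.add_mul_mod_self_left] at h1
    have h2 := Nat.div_add_mod (2 * q * k + 1) (n + 1)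
    rw [← h1] at h2
    generalize (2 * q * k + 1) / (n + 1) = r at h2
    have h3 : (n + 1) * r = 2 * ((q + 1) * r) := by rw [hq]; ring
    have h4 : 2 * q * k = 2 * (q * k) := by ring
    have h5 : k * n = 2 * (q * k) + k := by rw [hq]; ring
    have h6 : (n + 1) * r = n * r + r := by ring
    exact ⟨r, t - 1, by omega, by omega⟩
  obtain ⟨r, τ, rfl, hr⟩ := hr
  obtain ⟨a, b, hab, hba, hba'⟩ : ∃ a b, k = a + b ∧ b ≤ a ∧ a ≤ b + 1 :=
    ⟨(k + 1) / 2, k / 2, by omega, by omega, by omega⟩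
  have hG : g = k + k * n + 2 * q + 3 + τ + r + n * r := by omega
  have hμ2 : μ = k * n + q + 1 := by
    have : 2 * n * k = 2 * (k * n) := by ring
    omega
  have hC : ∀ x < g, Cs n q k a b τ r x (ff n q k a τ r x) := fun x hx =>
    Cs_of hq hab hk0 (by omega)
  have hCl : ∀ {x y}, Cs n q k a b τ r x y → x < g := fun h => by
    rw [hG]; exact Cs_lt hq hab h
  have hCf : ∀ {x y}, Cs n q k a b τ r x y → ff n q k a τ r x = y := fun h =>
    Cs_uniq hq hab (hC _ (hCl h)) h
  have hCC : ∀ {x y}, Cs n q k a b τ r x y → Cs n q k a b τ r y y := by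
    intro x y h
    cases h with
    | c1 _ h => exact .c1 _ h
    | c2 => exact .c2
    | c3 => exact .c6 _ rfl
    | c4 => exact .c1 _ (by omega)
    | c5 l => exact .c8 l _ (by omega) (by omega)
    | c6 _ h => exact .c6 _ h
    | c7 _ _ _ _ _ h => exact .c6 _ h
    | c8 l => exact .c8 l _ (by omega) (by omega)
    | c9 => exact .c2
    | c10 u => exact .c10 u _ (by omega) (by omega)
    | c11 v => exact .c10 (r - 1 - v) _ (by omega) (by omega)
  clear hg hgq hμ ht1 ht2
  generalize hf : ff n q k a τ r = f at *
  have hd : ∀ x d, (f x + d = x ∨ x + d = f x) → d ≤ μ → dff g f x = d := by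
    intro x d h1 h2
    unfold dff spn
    clear hC hCl hCf hCC hf
    omega
  have hd' : ∀ x d, (f x + d = x ∨ x + d = f x) → μ < d → dff g f x = g - d := by
    intro x d h1 h2
    unfold dff spn
    clear hC hCl hCf hCC hf
    omega
  have hspn : ∀ x, spn f x = max (f x) x - min (f x) x := fun x => rfl
  refine framework_s6 n q g μ (τ + 1) a (a + q + k * n + 1) f (pr n q k a)
    (by omega) hq1 (by omega) ?_ ?_ ?_ ?_ ?_ ?_ ?_ ?_ ?_ ?_ ?_ ?_ ?_ ?_ ?_
  · intro x hx
    exact hCl (hCC (hC x hx))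
  · intro x hx
    exact hCf (hCC (hC x hx))
  · exact hCl .c2
  · exact hCf .c2
  · -- little star
    apply card_of_image _ _ (fun u => k + k * n + 2 * q + 3 + u)
    · intro u v _ _ h
      omega
    · intro x
      simp only [Finset.mem_filter, Finset.mem_range]
      constructor
      · rintro ⟨hx, h1, h2⟩
        have h := hC x hx
        generalize f x = y at *
        cases h with
        | c9 u => exact ⟨u, by omega, by omega⟩
        | _ => omega
      · rintro ⟨u, hu, rfl⟩
        have h : Cs n q k a b τ r (k + k * n + 2 * q + 3 + u) a := .c9 u _ (by omega) rfl
        refine ⟨hCl h, ?_, hCf h⟩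
        rw [hCf h]
        omega
  · -- big stars
    intro c hc hfc hca
    have hcc := hC c hc
    have mk : ∀ φ : ℕ → ℕ, (∀ u v, u < n → v < n → φ u = φ v → u = v) →
        (∀ u < n, Cs n q k a b τ r (φ u) c ∧ φ u ≠ c) →
        (∀ x, Cs n q k a b τ r x c → x ≠ c → ∃ u < n, φ u = x) →
        ((Finset.range g).filter (fun x => f x ≠ x ∧ f x = c)).card = n := by
      intro φ h1 h2 h3
      apply card_of_image _ _ φ h1
      intro x
      simp only [Finset.mem_filter, Finset.mem_range]
      constructor
      · rintro ⟨hx, h4, h5⟩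
        have h := hC x hx
        rw [h5] at h h4
        exact h3 x h h4.symm
      · rintro ⟨u, hu, rfl⟩
        obtain ⟨h4, h5⟩ := h2 u hu
        exact ⟨hCl h4, by rw [hCf h4]; exact h5.symm, hCf h4⟩
    clear hC hCl hCf hCC hd hd' hspn hf
    generalize f c = c' at *
    cases hcc with
    | c1 _ h =>
      apply mk (fun j => a + q + 1 + (a - 1 - c) + k * j)
      · intro u v hu hv huv
        exact Nat.eq_of_mul_eq_mul_left hk0 (by omega)
      · intro j hj
        exact ⟨.c4 (a - 1 - c) j _ _ (by omega) hj (mul_bd hj) rfl (by omega), by omega⟩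
      · intro x hx hne
        clear mk
        generalize hy : c = y at hx
        cases hx with
        | c4 i j _ _ _ hj =>
          refine ⟨j, hj, ?_⟩
          omega
        | _ => omega
    | c6 _ h =>
      apply mk (fun u => if u < q then a + 1 + u else a + k * n + 2 + u)
      · intro u v hu hv huv
        try dsimp only at huv
        split_ifs at huv <;> omega
      · intro u hu
        try dsimp only
        split_ifs with h1
        · rw [h]
          exact ⟨.c3 u _ h1 rfl, by omega⟩
        · exact ⟨.c7 (u - q) _ _ (by omega) (by omega) h, by omega⟩
      · intro x hx hne
        clear mk
        generalize hy : c = y at hx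
        cases hx with
        | c3 u _ hu =>
          refine ⟨u, by omega, ?_⟩
          rw [if_pos hu]; omega
        | c7 u =>
          refine ⟨u + q, by omega, ?_⟩
          rw [if_neg (by omega)]; omega
        | _ => omega
    | c8 l _ hl h =>
      apply mk (fun j => a + q + k * n - l - k * j)
      · intro u v hu hv huv
        have := mul_bd (k := k) hu
        have := mul_bd (k := k) hv
        exact Nat.eq_of_mul_eq_mul_left hk0 (by omega)
      · intro j hj
        have := mul_bd (k := k) hj
        exact ⟨.c5 l j _ _ hl hj this (by omega) h, by omega⟩
      · intro x hx hne
        clear mk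
        generalize hy : c = y at hx
        cases hx with
        | c5 l' j _ _ _ hj =>
          refine ⟨j, hj, ?_⟩
          omega
        | _ => omega
    | c10 u _ hu h =>
      have hv : r - 1 - u < r := by omega
      have hb := mul_bd (k := n) hv
      apply mk (fun w => k + k * n + 2 * q + 3 + τ + r + n * (r - 1 - u) + w)
      · intro u v hu hv huv
        omega
      · intro w hw
        exact ⟨.c11 (r - 1 - u) w _ _ hv hw hb rfl (by omega), by omega⟩
      · intro x hx hne
        clear mk
        generalize hy : c = y at hx
        cases hx with
        | c11 v w _ _ _ hw =>
          refine ⟨w, hw, ?_⟩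
          have : r - 1 - u = v := by omega
          rw [this]
          omega
        | _ => omega
    | _ => omega
  · -- pure injective
    have key : ∀ x < g, f x ≠ x → pr n q k a x →
        (∃ i J, 2 * i < k ∧ dff g f x = q + 2 + (2 * i + k * J) ∧ x = a + q + 1 + i + k * J) ∨
        (∃ l J, 2 * l + 1 < k ∧ dff g f x = q + 2 + (2 * l + 1 + k * J) ∧
          x + l + k * J = a + q + k * n) ∨
        (dff g f x ≤ q + 1 ∧ x = a + q + k * n + 1 + dff g f x) := by
      intro x hx h1 h3
      have hX := hC x hx
      unfold pr at h3
      have hd1 := hd x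
      clear hd hC hCl hCf hCC hf
      generalize dff g f x = d at *
      generalize f x = x' at *
      cases hX with
      | c4 i j x _ hi hj hkj hx hy =>
        have := hd1 (q + 2 + (2 * i + k * j)) (by omega) (by omega)
        exact Or.inl ⟨i, j, by omega, this, hx⟩
      | c5 l j x y hi hj hkj hx hy =>
        have := hd1 (q + 2 + (2 * l + 1 + k * j)) (by omega) (by omega)
        exact Or.inr (Or.inl ⟨l, j, by omega, this, hx⟩)
      | c7 u =>
        have := hd1 (u + 1) (by omega) (by omega)
        exact Or.inr (Or.inr ⟨by omega, by omega⟩)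
      | _ => omega
    intro x hx y hy h1 h2 h3 h4 h5
    have hX := key x hx h1 h3
    have hY := key y hy h2 h4
    rw [← h5] at hY
    clear key hd hC hCl hCf hCC hf h3 h4 h1 h2 h5
    generalize dff g f x = d at *
    rcases hX with ⟨i, J, b1, b2, b3⟩ | ⟨i, J, b1, b2, b3⟩ | ⟨b1, b2⟩ <;>
    rcases hY with ⟨i', J', b1', b2', b3'⟩ | ⟨i', J', b1', b2', b3'⟩ | ⟨b1', b2'⟩
    · obtain ⟨h6, rfl⟩ := divmod_uniq b1 b1' (by omega : 2 * i + k * J = 2 * i' + k * J')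
      omega
    · have := divmod_uniq b1 b1' (by omega : 2 * i + k * J = 2 * i' + 1 + k * J')
      omega
    · omega
    · have := divmod_uniq b1 b1' (by omega : 2 * i + 1 + k * J = 2 * i' + k * J')
      omega
    · obtain ⟨h6, rfl⟩ := divmod_uniq b1 b1' (by omega : 2 * i + 1 + k * J = 2 * i' + 1 + k * J')
      omega
    · omega
    · omega
    · omega
    · omega
  · -- prime injective
    have key : ∀ x < g, f x ≠ x → ¬ pr n q k a x →
        (k * n < dff g f x ∧ x + dff g f x = a + q + k * n + 1) ∨
        (n * r + r < dff g f x ∧ dff g f x ≤ k * n ∧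
          x + dff g f x = g + a) ∨
        (∃ v u, u < n + 1 ∧ dff g f x = 1 + (u + (n + 1) * v) ∧ dff g f x ≤ n * r + r ∧
          x = k + k * n + 2 * q + 3 + τ + r + n * v + u) := by
      intro x hx h1 h3
      have hX := hC x hx
      unfold pr at h3
      have hd1 := hd x
      have hd2 := hd' x
      clear hd hd' hC hCl hCf hCC hf
      generalize dff g f x = d at *
      generalize f x = x' at *
      cases hX with
      | c3 u =>
        have := hd1 (k * n + q - u) (by omega) (by omega)
        exact Or.inl ⟨by omega, by omega⟩
      | c9 u =>
        have := hd2 (b + k * n + 2 * q + 3 + u) (by omega) (by omega)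
        exact Or.inr (Or.inl ⟨by omega, by omega, by omega⟩)
      | c11 v u x _ hv hu hnv hx hy =>
        have e1 : (n + 1) * v = n * v + v := by ring
        have := hd1 (1 + (u + (n + 1) * v)) (by omega) (by omega)
        exact Or.inr (Or.inr ⟨v, u, by omega, this, by omega, hx⟩)
      | _ => omega
    intro x hx y hy h1 h2 h3 h4 h5
    have hX := key x hx h1 h3
    have hY := key y hy h2 h4
    rw [← h5] at hY
    clear key hd hC hCl hCf hCC hf h3 h4 h1 h2 h5
    generalize dff g f x = d at *
    rcases hX with ⟨b1, b2⟩ | ⟨b1, b2, b3⟩ | ⟨v, u, b1, b2, b3, b4⟩ <;>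
    rcases hY with ⟨b1', b2'⟩ | ⟨b1', b2', b3'⟩ | ⟨v', u', b1', b2', b3', b4'⟩
    · omega
    · omega
    · omega
    · omega
    · omega
    · omega
    · omega
    · omega
    · obtain ⟨h6, rfl⟩ := divmod_uniq b1 b1' (by omega : u + (n + 1) * v = u' + (n + 1) * v')
      omega
  · -- surjective
    intro d h1 h2
    have key : ∀ x y, Cs n q k a b τ r x y → y ≠ x → pr n q k a x → max y x - min y x = d →
        ∃ x < g, f x ≠ x ∧ pr n q k a x ∧ spn f x = d := by
      intro x y h h3 h4 h5
      refine ⟨x, hCl h, ?_, h4, ?_⟩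
      · rw [hCf h]; exact h3
      · rw [hspn, hCf h]; exact h5
    by_cases hd : d ≤ q + 1
    · refine key (a + q + k * n + 1 + d) (a + q + k * n + 1) (.c7 (d - 1) _ _ ?_ ?_ rfl) ?_ ?_ ?_
        <;> (try unfold pr) <;> omega
    · have hdm := Nat.div_add_mod (d - (q + 2)) k
      have hm := Nat.mod_lt (d - (q + 2)) hk0
      have hj : (d - (q + 2)) / k < n := by
        rw [Nat.div_lt_iff_lt_mul hk0, mul_comm n k]; omega
      generalize (d - (q + 2)) / k = J at *
      generalize (d - (q + 2)) % k = e at *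
      have hkJ := mul_bd (k := k) hj
      obtain ⟨i, hi | hi⟩ : ∃ i, e = 2 * i ∨ e = 2 * i + 1 := ⟨e / 2, by omega⟩
      · refine key (a + q + 1 + i + k * J) (a - 1 - i)
          (.c4 i J _ _ ?_ hj hkJ rfl ?_) ?_ ?_ ?_ <;> (try unfold pr) <;> omega
      · refine key (a + q + k * n - i - k * J) (a + 2 * q + k * n + 3 + i)
          (.c5 i J _ _ ?_ hj hkJ ?_ rfl) ?_ ?_ ?_ <;> (try unfold pr) <;> omega
  · exact hCl (.c6 _ rfl)
  · exact hCf (.c6 _ rfl)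
  · -- mixed pure
    apply card_of_image _ _ (fun u => a + q + k * n + 2 + u)
    · intro u v _ _ h
      omega
    · intro x
      simp only [Finset.mem_filter, Finset.mem_range]
      constructor
      · rintro ⟨hx, ⟨h1, h2⟩, h3⟩
        have h := hC x hx
        unfold pr at h3
        generalize f x = y at *
        cases h with
        | c7 u => exact ⟨u, by omega, by omega⟩
        | _ => omega
      · rintro ⟨u, hu, rfl⟩
        have h : Cs n q k a b τ r (a + q + k * n + 2 + u) (a + q + k * n + 1) :=
          .c7 u _ _ (by omega) rfl rfl
        refine ⟨hCl h, ⟨?_, hCf h⟩, ?_⟩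
        · rw [hCf h]
          omega
        · unfold pr; omega
  · -- mixed prime
    apply card_of_image _ _ (fun u => a + 1 + u)
    · intro u v _ _ h
      omega
    · intro x
      simp only [Finset.mem_filter, Finset.mem_range]
      constructor
      · rintro ⟨hx, ⟨h1, h2⟩, h3⟩
        have h := hC x hx
        unfold pr at h3
        generalize hy : f x = y at *
        cases h with
        | c3 u => exact ⟨u, by omega, by omega⟩
        | _ => omega
      · rintro ⟨u, hu, rfl⟩
        have h : Cs n q k a b τ r (a + 1 + u) (a + q + k * n + 1) :=
          .c3 u _ (by omega) rfl
        refine ⟨hCl h, ⟨?_, hCf h⟩, ?_⟩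
        · rw [hCf h]
          omega
        · unfold pr; omega
  · -- mixed forward
    intro x hx h1 h2
    have h := hC x hx
    rw [hspn]
    unfold pr at h2
    generalize f x = y at *
    cases h <;> omega
  · -- only one mixed
    intro x hx y hy h1 h2 h3 h4 h5
    unfold pr at h3 h4
    have hX := hC x hx
    have hY := hC y hy
    generalize f x = x' at *
    generalize f y = y' at *
    have hX' : x' < a ∨ x' = a + q + k * n + 1 ∨
        (a + q + k * n + 1 < x' ∧ x' < k + k * n + 2 * q + 3) := by
      clear hY h4 h2 h5
      cases hX <;> omega
    have hY' : y' = a ∨ y' = a + q + k * n + 1 ∨ k + k * n + 2 * q + 3 ≤ y' := by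
      clear hX h3 h1 h5
      cases hY <;> omega
    omega
end

section
/- Let n > 1 be odd, let k ≥ 2 be an integer, and let g = 2nk+2. There exists an almost n-star factor on Z_g such that every difference d ∈ {1,…,nk} is realized at least once by a forward edge of the factor and is realized by at most two edges of the factor, and whose little star has t−1 leaves, where t is the unique integer with 0 ≤ t ≤ n and t ≡ g (mod n+1) (there is no little star when t = 0). -/
def sB (m j : ℕ) : ℕ := if (m + j) % 2 = 0 then j + 1 else j - 1
def sA (m M j : ℕ) : ℕ := if (m + j) % 2 = 1 then min (j + 1) (M - 1) else j - 1

def ctr (n m M x : ℕ) : ℕ :=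
  if x < m * n then m * n + sB m ((m * n - 1 - x) / n)
  else if x < m * n + m + M then x
  else m * n + m + M - 1 - sA m M ((x - (m * n + m + M)) / n)

theorem sB_lt (m j : ℕ) (h : j < m) : sB m j < m := by
  unfold sB; split_ifs <;> omega

theorem sB_inv (m j : ℕ) : sB m (sB m j) = j := by
  unfold sB; split_ifs <;> omega

theorem sA_lt (m M j : ℕ) (h : j < M) : sA m M j < M := by
  unfold sA; split_ifs <;> omega

theorem sA_inv (m M j : ℕ) (_ : M = m ∨ M = m + 1) (h : j < M) : sA m M (sA m M j) = j := by
  unfold sA; split_ifs <;> omega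

def LoP (n m M δ x D j a : ℕ) : Prop :=
  a < n ∧ ((m + j) % 2 = 1 ∧ x + 1 + j * n + a = m * n ∨
    (m + j) % 2 = 0 ∧ x = m * n + m + M + j * n + a) ∧
  (j = 0 ∧ D = a + 1 ∨ 0 < j ∧ D = j * n + j + a) ∧
  (M = m → D + 2 ≤ m * n + m) ∧ (M = m + 1 → D + 2 + δ ≤ m * n + m + n + 1)

def HiP (n m M δ x D j a : ℕ) : Prop :=
  a < n ∧ ((m + j) % 2 = 0 ∧ x + 1 + j * n + a = m * n ∨
    (m + j) % 2 = 1 ∧ x = m * n + m + M + j * n + a) ∧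
  (j + 1 = M ∧ D = j * n + j + a + 1 ∨ j + 1 ≠ M ∧ D = j * n + j + a + 2) ∧
  (M = m → D + 1 + δ ≤ m * n + m) ∧ (M = m + 1 → D ≤ m * n + m)

theorem mul_step (n i j : ℕ) (h : i < j) : i * n + n ≤ j * n := by
  have := Nat.mul_le_mul_right n h
  rw [Nat.succ_mul] at this
  exact this

theorem mul_eq (n m M : ℕ) : (m + M) * (n + 1) = m * n + M * n + m + M := by ring

theorem lt_of_mul_lt (n i j a : ℕ) (h : i * n + a < j * n) : i < j := by
  by_contra hc
  have := Nat.mul_le_mul_right n (not_lt.1 hc)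
  omega

theorem ctr_left (n m M x j a : ℕ) (ha : a < n) (h : x + 1 + j * n + a = m * n) :
    ctr n m M x = m * n + sB m j := by
  have h1 : (m * n - 1 - x) / n = j := by
    have : m * n - 1 - x = a + j * n := by omega
    rw [this, Nat.add_mul_div_right _ _ (by omega), Nat.div_eq_of_lt ha]; omega
  unfold ctr
  rw [if_pos (by omega), h1]

theorem ctr_right (n m M x j a : ℕ) (ha : a < n) (h : x = m * n + m + M + j * n + a) :
    ctr n m M x = m * n + m + M - 1 - sA m M j := by
  have h1 : (x - (m * n + m + M)) / n = j := by
    have : x - (m * n + m + M) = a + j * n := by omega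
    rw [this, Nat.add_mul_div_right _ _ (by omega), Nat.div_eq_of_lt ha]; omega
  unfold ctr
  rw [if_neg (by omega), if_neg (by omega), h1]

theorem leaf_cases (n m M δ g x : ℕ) (hn : 3 ≤ n)
    (hg : g + δ = (m + M) * (n + 1)) (hx : x < g)
    (hl : x < m * n ∨ m * n + m + M ≤ x) :
    ∃ j a, a < n ∧ ((j < m ∧ x + 1 + j * n + a = m * n ∧ ctr n m M x = m * n + sB m j) ∨
      (j < M ∧ x = m * n + m + M + j * n + a ∧ j * n + a + δ < M * n ∧
        ctr n m M x = m * n + m + M - 1 - sA m M j)) := by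
  rw [mul_eq] at hg
  rcases hl with hl | hl
  · have e := Nat.div_add_mod (m * n - 1 - x) n
    have e2 := Nat.mod_lt (m * n - 1 - x) (show n > 0 by omega)
    rw [Nat.mul_comm] at e
    have e3 : x + 1 + (m * n - 1 - x) / n * n + (m * n - 1 - x) % n = m * n := by omega
    refine ⟨_, _, e2, Or.inl ⟨?_, e3, ctr_left _ _ _ _ _ _ e2 e3⟩⟩
    exact lt_of_mul_lt n _ _ ((m * n - 1 - x) % n) (by omega)
  · have e := Nat.div_add_mod (x - (m * n + m + M)) n
    have e2 := Nat.mod_lt (x - (m * n + m + M)) (show n > 0 by omega)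
    rw [Nat.mul_comm] at e
    have e3 : x = m * n + m + M + (x - (m * n + m + M)) / n * n + (x - (m * n + m + M)) % n := by
      omega
    refine ⟨_, _, e2, Or.inr ⟨?_, e3, by omega, ctr_right _ _ _ _ _ _ e2 e3⟩⟩
    exact lt_of_mul_lt n _ _ ((x - (m * n + m + M)) % n) (by omega)

theorem leaf_char (n m M δ g x : ℕ) (hn : 3 ≤ n) (hm : 2 ≤ m) (hM : M = m ∨ M = m + 1)
    (hg : g + δ = (m + M) * (n + 1)) (hδ : δ + 1 ≤ n) (hx : x < g)
    (hl : x < m * n ∨ m * n + m + M ≤ x) :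
    ∃ D j a, (x + D = ctr n m M x ∨ ctr n m M x + D = x) ∧ 0 < D ∧
      (LoP n m M δ x D j a ∨ HiP n m M δ x D j a) := by
  obtain ⟨j, a, ha, h⟩ := leaf_cases n m M δ g x hn hg hx hl
  have q0 := mul_step n 0 m (by omega)
  have q1 := mul_step n 1 m (by omega)
  have q2 : j < m → j * n + n ≤ m * n := mul_step n j m
  have q3 : j + 1 < m → (j + 1) * n + n ≤ m * n := mul_step n (j + 1) m
  have q4 : M = m + 1 → M * n = m * n + n := by rintro rfl; ring
  have q6 : M = m → M * n = m * n := by rintro rfl; ring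
  have q5 : (j + 1) * n = j * n + n := by ring
  have q7 : j = m → j * n = m * n := by rintro rfl; ring
  have q8 : j + 1 = m → j * n + n = m * n := by rintro rfl; ring
  have q9 : j = 0 → j * n = 0 := by rintro rfl; ring
  rw [q5] at q3
  unfold LoP HiP
  rcases h with ⟨hj, hx1, hc⟩ | ⟨hj, hx1, hb, hc⟩
  · rw [hc]
    refine ⟨j * n + a + 1 + sB m j, j, a, Or.inl (by omega), by omega, ?_⟩
    by_cases hp : (m + j) % 2 = 0
    · right
      have hs : sB m j = j + 1 := by rw [sB, if_pos hp]
      rw [hs]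
      clear hc hs hx hl hg
      generalize j * n = jn at *
      generalize m * n = mn at *
      generalize M * n = Mn at *
      refine ⟨ha, by omega, by omega, by omega, by omega⟩
    · left
      have hs : sB m j = j - 1 := by rw [sB, if_neg hp]
      rw [hs]
      clear hc hs hx hl hg
      generalize j * n = jn at *
      generalize m * n = mn at *
      generalize M * n = Mn at *
      refine ⟨ha, by omega, by omega, by omega, by omega⟩
  · rw [hc]
    have := sA_lt m M j hj
    refine ⟨j * n + a + 1 + sA m M j, j, a, Or.inr (by omega), by omega, ?_⟩
    by_cases hp : (m + j) % 2 = 1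
    · right
      have hs : sA m M j = min (j + 1) (M - 1) := by rw [sA, if_pos hp]
      rw [hs]
      clear hc hs hx hl hg
      generalize j * n = jn at *
      generalize m * n = mn at *
      generalize M * n = Mn at *
      refine ⟨ha, by omega, by omega, by omega, by omega⟩
    · left
      have hs : sA m M j = j - 1 := by rw [sA, if_neg hp]
      rw [hs]
      clear hc hs hx hl hg
      generalize j * n = jn at *
      generalize m * n = mn at *
      generalize M * n = Mn at *
      refine ⟨ha, by omega, by omega, by omega, by omega⟩

theorem Lo_inj (n m M δ x D j a x' j' a' : ℕ) 
    (h : LoP n m M δ x D j a) (h' : LoP n m M δ x' D j' a') : x = x' := by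
  obtain ⟨h1, h2, h3, -⟩ := h
  obtain ⟨h1', h2', h3', -⟩ := h'
  have q1 := mul_step n j j'
  have q2 := mul_step n j' j
  have q9 : j = 0 → j * n = 0 := by rintro rfl; ring
  have q10 : j' = 0 → j' * n = 0 := by rintro rfl; ring
  have : j = j' := by
    clear h2 h2'
    generalize j * n = jn at *
    generalize j' * n = jn' at *
    omega
  subst this
  omega

theorem Hi_inj (n m M δ x D j a x' j' a' : ℕ) 
    (h : HiP n m M δ x D j a) (h' : HiP n m M δ x' D j' a') : x = x' := by
  obtain ⟨h1, h2, h3, -⟩ := h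
  obtain ⟨h1', h2', h3', -⟩ := h'
  have q1 := mul_step n j j'
  have q2 := mul_step n j' j
  have : j = j' := by
    clear h2 h2'
    generalize j * n = jn at *
    generalize j' * n = jn' at *
    omega
  subst this
  omega

theorem LoHi (n m M δ g x D j a x' D' j' a' : ℕ) (hM : M = m ∨ M = m + 1)
    (hg : g + δ = (m + M) * (n + 1)) (hδ : δ + 1 ≤ n)
    (h : LoP n m M δ x D j a) (h' : HiP n m M δ x' D' j' a') : D + D' < g := by
  obtain ⟨-, -, -, h1, h2⟩ := h
  obtain ⟨-, -, -, h1', h2'⟩ := h'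
  rw [mul_eq] at hg
  rcases hM with rfl | rfl
  · have := h1 rfl
    have := h1' rfl
    omega
  · have := h2 rfl
    have := h2' rfl
    have q4 : (m + 1) * n = m * n + n := by ring
    omega

/-- forward coverage -/
theorem cover (n m M δ g d : ℕ) (hn : 3 ≤ n) (hm : 2 ≤ m) (hM : M = m ∨ M = m + 1)
    (hg : g + δ = (m + M) * (n + 1)) (hδ : δ + 1 ≤ n) (hd : 1 ≤ d) (hd2 : 2 * d + 2 ≤ g) :
    ∃ x, x < g ∧ (x < m * n ∨ m * n + m + M ≤ x) ∧
      (x + d = ctr n m M x ∨ ctr n m M x + d = x) := by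
  rw [mul_eq] at hg
  have q4 : M = m + 1 → M * n = m * n + n := by rintro rfl; ring
  have q6 : M = m → M * n = m * n := by rintro rfl; ring
  have key : ∃ j a, a < n ∧ (
      ((m + j) % 2 = 1 ∧ j < m ∧ d = j * n + a + 1 + (j - 1)) ∨
      ((m + j) % 2 = 0 ∧ j < m ∧ d = j * n + a + 1 + (j + 1)) ∨
      ((m + j) % 2 = 0 ∧ j < M ∧ j * n + a + δ < M * n ∧ d = j * n + a + 1 + (j - 1)) ∨
      ((m + j) % 2 = 1 ∧ j < M ∧ j * n + a + δ < M * n ∧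
        d = j * n + a + 1 + min (j + 1) (M - 1))) := by
    obtain ⟨j, r, hr, hjr⟩ : ∃ j r, r < n + 1 ∧ d = j * n + j + r := by
      refine ⟨d / (n + 1), d % (n + 1), Nat.mod_lt _ (by omega), ?_⟩
      have := Nat.div_add_mod d (n + 1)
      rw [Nat.mul_comm, Nat.mul_add, Nat.mul_one] at this
      omega
    have q2 : j < m → j * n + n ≤ m * n := mul_step n j m
    have q3 : j + 1 < m → (j + 1) * n + n ≤ m * n := mul_step n (j + 1) m
    have q5 : (j + 1) * n = j * n + n := by ring
    have q7 : j = m → j * n = m * n := by rintro rfl; ring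
    have q8 : j + 1 = m → j * n + n = m * n := by rintro rfl; ring
    have q9 : j = 0 → j * n = 0 := by rintro rfl; ring
    have q11 : m < j → m * n + n ≤ j * n := mul_step n m j
    rw [q5] at q3
    have hjm : j < M := by
      generalize j * n = jn at *
      generalize m * n = mn at *
      generalize M * n = Mn at *
      omega
    by_cases c0 : j = 0
    · subst c0
      have := mul_step n 0 m (by omega)
      have := mul_step n 1 m (by omega)
      refine ⟨0, r - 1, by omega, ?_⟩
      rcases Nat.mod_two_eq_zero_or_one (m + 0) with hp | hp
      · right; right; left; omega
      · left; omega
    by_cases c1 : r < n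
    · refine ⟨j, r, c1, ?_⟩
      rcases Nat.mod_two_eq_zero_or_one (m + j) with hp | hp
      · right; right; left
        refine ⟨hp, hjm, ?_, by omega⟩
        generalize j * n = jn at *
        generalize m * n = mn at *
        generalize M * n = Mn at *
        omega
      · left
        omega
    by_cases c2 : j + 1 = M
    · refine ⟨j, n - 1, by omega, ?_⟩
      right; right; right
      generalize j * n = jn at *
      generalize m * n = mn at *
      generalize M * n = Mn at *
      refine ⟨?_, hjm, ?_, ?_⟩ <;> omega
    · refine ⟨j, n - 2, by omega, ?_⟩
      rcases Nat.mod_two_eq_zero_or_one (m + j) with hp | hp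
      · right; left
        omega
      · right; right; right
        refine ⟨hp, hjm, ?_, by omega⟩
        generalize j * n = jn at *
        generalize m * n = mn at *
        generalize M * n = Mn at *
        omega
  obtain ⟨j, a, ha, h⟩ := key
  have q2 : j < m → j * n + n ≤ m * n := mul_step n j m
  rcases h with ⟨hp, hj, hd⟩ | ⟨hp, hj, hd⟩ | ⟨hp, hj, hb, hd⟩ | ⟨hp, hj, hb, hd⟩
  · have hx : (m * n - 1 - j * n - a) + 1 + j * n + a = m * n := by omega
    refine ⟨m * n - 1 - j * n - a, by omega, by omega, ?_⟩
    rw [ctr_left _ _ _ _ j a ha hx, sB, if_neg (by omega)]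
    omega
  · have hx : (m * n - 1 - j * n - a) + 1 + j * n + a = m * n := by omega
    refine ⟨m * n - 1 - j * n - a, by omega, by omega, ?_⟩
    rw [ctr_left _ _ _ _ j a ha hx, sB, if_pos (by omega)]
    omega
  · refine ⟨m * n + m + M + j * n + a, ?_, ?_, ?_⟩
    rotate_left 2
    · rw [ctr_right _ _ _ _ j a ha rfl, sA, if_neg (by omega)]
      omega
    · omega
    · omega
  · refine ⟨m * n + m + M + j * n + a, ?_, ?_, ?_⟩
    rotate_left 2
    · rw [ctr_right _ _ _ _ j a ha rfl, sA, if_pos (by omega)]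
      omega
    · omega
    · omega

theorem ctr_range (n m M δ g x : ℕ) (hn : 3 ≤ n)
    (hg : g + δ = (m + M) * (n + 1)) (hx : x < g) :
    m * n ≤ ctr n m M x ∧ ctr n m M x < m * n + m + M := by
  by_cases hl : x < m * n ∨ m * n + m + M ≤ x
  · obtain ⟨j, a, ha, h⟩ := leaf_cases n m M δ g x hn hg hx hl
    rcases h with ⟨hj, hx1, hc⟩ | ⟨hj, hx1, hb, hc⟩
    · have := sB_lt m j hj
      omega
    · have := sA_lt m M j hj
      omega
  · unfold ctr
    rw [if_neg (by omega), if_pos (by omega)]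
    omega

theorem ctr_fix (n m M c : ℕ) (h1 : m * n ≤ c) (h2 : c < m * n + m + M) : ctr n m M c = c := by
  unfold ctr
  rw [if_neg (by omega), if_pos (by omega)]

/-- fibers -/
theorem fiber (n m M δ g c : ℕ) (hn : 3 ≤ n) (hM : M = m ∨ M = m + 1)
    (hm : 2 ≤ m) (hg : g + δ = (m + M) * (n + 1)) (hδ : δ + 1 ≤ n)
    (h1 : m * n ≤ c) (h2 : c < m * n + m + M) :
    ∃ u len, u + len ≤ g ∧ (∀ x, x < g → ((x ≠ c ∧ ctr n m M x = c) ↔ (u ≤ x ∧ x < u + len))) ∧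
      ((c = m * n + m + M - 1 - sA m M (M - 1) ∧ len = n - δ) ∨
       (c ≠ m * n + m + M - 1 - sA m M (M - 1) ∧ len = n)) := by
  have hg' := hg
  rw [mul_eq] at hg'
  have q4 : M = m + 1 → M * n = m * n + n := by rintro rfl; ring
  have q6 : M = m → M * n = m * n := by rintro rfl; ring
  have hsl := sA_lt m M (M - 1) (by omega)
  by_cases hc : c < m * n + m
  · obtain ⟨p, rfl⟩ : ∃ p, c = m * n + p := ⟨c - m * n, by omega⟩
    have hp : p < m := by omega
    have hj := sB_lt m p hp
    have q := mul_step n _ _ hj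
    refine ⟨m * n - sB m p * n - n, n, by omega, ?_, ?_⟩
    · intro x hx
      constructor
      · rintro ⟨hne, hcx⟩
        by_cases hl : x < m * n ∨ m * n + m + M ≤ x
        · obtain ⟨j, a, ha, h⟩ := leaf_cases n m M δ g x hn hg hx hl
          rcases h with ⟨hj, hx1, hc⟩ | ⟨hj, hx1, hb, hc⟩
          · have : sB m j = p := by omega
            rw [← this, sB_inv]
            omega
          · have := sA_lt m M j hj
            omega
        · rw [ctr_fix _ _ _ _ (by omega) (by omega)] at hcx
          omega
      · rintro ⟨ha, hb⟩
        refine ⟨by omega, ?_⟩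
        rw [ctr_left n m M x (sB m p) (m * n - 1 - x - sB m p * n) (by omega) (by omega), sB_inv]
    · right; omega
  · obtain ⟨p, rfl⟩ : ∃ p, c = m * n + m + M - 1 - p := ⟨m * n + m + M - 1 - c, by omega⟩
    obtain ⟨p', hp'⟩ : ∃ p', p' = min p (m + M - 1) := ⟨_, rfl⟩
    have hp : p < M := by omega
    have hj := sA_lt m M p hp
    have q := mul_step n _ _ hj
    have q8 := mul_step n (M - 1) M (by omega)
    have q9 : M * n = (M - 1) * n + n := by
      obtain ⟨M', rfl⟩ : ∃ M', M = M' + 1 := ⟨M - 1, by omega⟩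
      simp; ring
    have hinv := sA_inv m M p hM hp
    have hinv' := sA_inv m M (M - 1) hM (by omega)
    by_cases hlast : sA m M p = M - 1
    · refine ⟨m * n + m + M + (M - 1) * n, n - δ, by omega, ?_, ?_⟩
      · intro x hx
        constructor
        · rintro ⟨hne, hcx⟩
          by_cases hl : x < m * n ∨ m * n + m + M ≤ x
          · obtain ⟨j, a, ha, h⟩ := leaf_cases n m M δ g x hn hg hx hl
            rcases h with ⟨hj, hx1, hc⟩ | ⟨hj, hx1, hb, hc⟩
            · have := sB_lt m j hj
              omega
            · have := sA_lt m M j hj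
              have e : sA m M j = p := by omega
              have : j = M - 1 := by rw [← hlast, ← e, sA_inv _ _ _ hM hj]
              subst this
              omega
          · rw [ctr_fix _ _ _ _ (by omega) (by omega)] at hcx
            omega
        · rintro ⟨ha, hb⟩
          refine ⟨by omega, ?_⟩
          rw [ctr_right n m M x (M - 1) (x - (m * n + m + M + (M - 1) * n)) (by omega) (by omega),
            ← hlast, hinv]
      · left
        rw [← hlast, hinv]
        omega
    · have q' := mul_step n (sA m M p) (M - 1) (by omega)
      refine ⟨m * n + m + M + sA m M p * n, n, by omega, ?_, ?_⟩
      · intro x hx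
        constructor
        · rintro ⟨hne, hcx⟩
          by_cases hl : x < m * n ∨ m * n + m + M ≤ x
          · obtain ⟨j, a, ha, h⟩ := leaf_cases n m M δ g x hn hg hx hl
            rcases h with ⟨hj, hx1, hc⟩ | ⟨hj, hx1, hb, hc⟩
            · have := sB_lt m j hj
              omega
            · have := sA_lt m M j hj
              have e : sA m M j = p := by omega
              have : j = sA m M p := by rw [← e, sA_inv _ _ _ hM hj]
              subst this
              omega
          · rw [ctr_fix _ _ _ _ (by omega) (by omega)] at hcx
            omega
        · rintro ⟨ha, hb⟩
          refine ⟨by omega, ?_⟩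
          rw [ctr_right n m M x (sA m M p) (x - (m * n + m + M + sA m M p * n)) (by omega)
            (by omega), hinv]
      · right
        refine ⟨fun h => hlast ?_, rfl⟩
        have : p = sA m M (M - 1) := by omega
        rw [this, hinv']

def fstar {g : ℕ} (F : Fin g → Fin g) (c : Fin g) : Fin g × Finset (Fin g) :=
  (c, Finset.univ.filter (fun x => x ≠ c ∧ F x = c))

def fP {g : ℕ} (F : Fin g → Fin g) : Finset (Fin g × Finset (Fin g)) :=
  Finset.univ.image (fun x => fstar F (F x))

theorem mem_fP {g : ℕ} (F : Fin g → Fin g) (p : Fin g × Finset (Fin g)) :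
    p ∈ fP F ↔ ∃ x, fstar F (F x) = p := by
  simp [fP]

theorem fP_part {g : ℕ} (F : Fin g → Fin g) (hF : ∀ x, F (F x) = F x) :
    (∀ p ∈ fP F, p.1 ∉ p.2) ∧ (∀ x : Fin g, ∃! p, p ∈ fP F ∧ (x = p.1 ∨ x ∈ p.2)) := by
  constructor
  · intro p hp
    obtain ⟨x, rfl⟩ := (mem_fP F p).1 hp
    simp [fstar]
  · intro x
    refine ⟨fstar F (F x), ⟨(mem_fP F _).2 ⟨x, rfl⟩, ?_⟩, ?_⟩
    · by_cases h : x = F x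
      · left; exact h
      · right; simp [fstar, h]
    · rintro p ⟨hp, hx⟩
      obtain ⟨y, rfl⟩ := (mem_fP F p).1 hp
      have : F x = F y := by
        rcases hx with hx | hx
        · simp only [fstar] at hx
          rw [hx, hF]
        · simp [fstar] at hx
          exact hx.2
      rw [this]

theorem mem_edges {g : ℕ} (F : Fin g → Fin g) (e : Sym2 (Fin g)) :
    e ∈ factorEdges g (fP F) ↔ ∃ x, F x ≠ x ∧ e = s(F x, x) := by
  unfold factorEdges
  rw [Finset.mem_biUnion]
  constructor
  · rintro ⟨p, hp, he⟩
    obtain ⟨y, rfl⟩ := (mem_fP F p).1 hp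
    simp only [starEdgeSet, fstar, Finset.mem_image, Finset.mem_filter, Finset.mem_univ,
      true_and] at he
    obtain ⟨x, ⟨h1, h2⟩, rfl⟩ := he
    exact ⟨x, by rw [h2]; exact fun h => h1 h.symm, by rw [h2]⟩
  · rintro ⟨x, hx, rfl⟩
    refine ⟨fstar F (F x), (mem_fP F _).2 ⟨x, rfl⟩, ?_⟩
    simp only [starEdgeSet, fstar, Finset.mem_image, Finset.mem_filter, Finset.mem_univ,
      true_and]
    exact ⟨x, ⟨fun h => hx h.symm, rfl⟩, rfl⟩

theorem span_eq {g : ℕ} (u v : Fin g) (D : ℕ) (h : v.val + D = u.val ∨ u.val + D = v.val) :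
    pairSpan g s(u, v) = D := by
  show max u.val v.val - min u.val v.val = D
  omega

theorem core (n m M δ g : ℕ) (hn : 3 ≤ n) (hm : 2 ≤ m) (hM : M = m ∨ M = m + 1)
    (hg : g + δ = (m + M) * (n + 1)) (hδ : δ + 1 ≤ n) :
    ∃ P : Finset (Fin g × Finset (Fin g)),
      ((∀ p ∈ P, p.1 ∉ p.2) ∧ (∀ x : Fin g, ∃! p, p ∈ P ∧ (x = p.1 ∨ x ∈ p.2)) ∧
      (∃ L ∈ P, L.2.card = n - δ ∧ ∀ p ∈ P, p ≠ L → p.2.card = n)) ∧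
      (∀ d, 1 ≤ d → 2 * d + 2 ≤ g →
        ∃ e ∈ factorEdges g P, pairDiff g e = d ∧ IsForwardEdge g e) ∧
      (∀ d, 1 ≤ d → 2 * d + 2 ≤ g →
        ((factorEdges g P).filter (fun e => pairDiff g e = d)).card ≤ 2) := by
  have hg' := hg
  rw [mul_eq] at hg'
  have hMn : M * n = m * n ∨ M * n = m * n + n := by
    rcases hM with rfl | rfl
    · left; rfl
    · right; ring
  have hcg : m * n + m + M ≤ g := by
    have := mul_step n 1 m (by omega)
    omega
  have hr : ∀ x : Fin g, m * n ≤ ctr n m M x ∧ ctr n m M x < m * n + m + M :=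
    fun x => ctr_range n m M δ g x hn hg x.2
  let F : Fin g → Fin g := fun x => ⟨ctr n m M x, by have := hr x; omega⟩
  have hF : ∀ x, F (F x) = F x := by
    intro x
    apply Fin.ext
    exact ctr_fix n m M _ (hr x).1 (hr x).2
  have hpart := fP_part F hF
  have hfix : ∀ x : Fin g, F x = x ↔ ¬ (x.val < m * n ∨ m * n + m + M ≤ x.val) := by
    intro x
    constructor
    · intro h
      have h1 := hr x
      have h2 : ctr n m M x = x := congrArg Fin.val h
      omega
    · intro h
      apply Fin.ext
      exact ctr_fix n m M _ (by omega) (by omega)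
  have hcard : ∀ c : Fin g, m * n ≤ c.val → c.val < m * n + m + M →
      (c.val = m * n + m + M - 1 - sA m M (M - 1) ∧ (fstar F c).2.card = n - δ) ∨
      (c.val ≠ m * n + m + M - 1 - sA m M (M - 1) ∧ (fstar F c).2.card = n) := by
    intro c h1 h2
    obtain ⟨u, len, hu, hx, hlen⟩ := fiber n m M δ g c hn hM hm hg hδ h1 h2
    have : (fstar F c).2.card = len := by
      rw [← Finset.card_map Fin.valEmbedding]
      have : (fstar F c).2.map Fin.valEmbedding = Finset.Ico u (u + len) := by
        ext y
        simp only [fstar, Finset.mem_map, Finset.mem_filter, Finset.mem_univ, true_and,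
          Finset.mem_Ico, Fin.valEmbedding_apply]
        constructor
        · rintro ⟨x, ⟨hxc, hFx⟩, rfl⟩
          refine (hx x x.2).1 ⟨fun h => hxc (Fin.ext h), congrArg Fin.val hFx⟩
        · intro hy
          have hyg : y < g := by omega
          obtain ⟨a1, a2⟩ := (hx y hyg).2 hy
          exact ⟨⟨y, hyg⟩, ⟨fun h => a1 (congrArg Fin.val h), Fin.ext a2⟩, rfl⟩
      rw [this]; simp
    rw [this]
    exact hlen
  refine ⟨fP F, ⟨hpart.1, hpart.2, ?_⟩, ?_, ?_⟩
  · have hs := sA_lt m M (M - 1) (by omega)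
    let c0 : Fin g := ⟨m * n + m + M - 1 - sA m M (M - 1), by omega⟩
    have hc0 : F c0 = c0 := (hfix c0).2 (by simp only [c0]; omega)
    refine ⟨fstar F c0, (mem_fP F _).2 ⟨c0, by rw [hc0]⟩, ?_, ?_⟩
    · rcases hcard c0 (by simp only [c0]; omega) (by simp only [c0]; omega) with h | h
      · exact h.2
      · exact absurd rfl h.1
    · intro p hp hne
      obtain ⟨x, rfl⟩ := (mem_fP F p).1 hp
      rcases hcard (F x) (hr x).1 (hr x).2 with h | h
      · exact absurd (congrArg (fstar F) (Fin.ext h.1 : F x = c0)) hne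
      · exact h.2
  · intro d hd hd2
    obtain ⟨x, hx, hl, hxd⟩ := cover n m M δ g d hn hm hM hg hδ hd hd2
    have hsp : pairSpan g s(F ⟨x, hx⟩, ⟨x, hx⟩) = d := span_eq _ _ _ hxd
    have hdf : pairDiff g s(F ⟨x, hx⟩, ⟨x, hx⟩) = d := by
      unfold pairDiff; rw [hsp]; omega
    refine ⟨s(F ⟨x, hx⟩, ⟨x, hx⟩), (mem_edges F _).2 ⟨⟨x, hx⟩, ?_, rfl⟩, hdf, ?_⟩
    · intro h
      exact (hfix _).1 h hl
    · unfold IsForwardEdge; rw [hdf, hsp]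
  · intro d hd hd2
    have hU : ∀ x : Fin g, ∃ U : ℕ, F x ≠ x → ∃ D j a, pairSpan g s(F x, x) = D ∧ 0 < D ∧ D < g ∧
        ((U = D ∧ LoP n m M δ x D j a) ∨ (U = g - D ∧ HiP n m M δ x D j a)) := by
      intro x
      by_cases hx : F x = x
      · exact ⟨0, fun h => absurd hx h⟩
      have hl : x.val < m * n ∨ m * n + m + M ≤ x.val := by
        by_contra hc
        exact hx ((hfix x).2 hc)
      obtain ⟨D, j, a, hD, hD0, h⟩ := leaf_char n m M δ g x hn hm hM hg hδ x.2 hl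
      have hDg : D < g := by
        have := x.2
        have := hr x
        omega
      have hsp : pairSpan g s(F x, x) = D := span_eq _ _ _ hD
      rcases h with h | h
      · exact ⟨D, fun _ => ⟨D, j, a, hsp, hD0, hDg, Or.inl ⟨rfl, h⟩⟩⟩
      · exact ⟨g - D, fun _ => ⟨D, j, a, hsp, hD0, hDg, Or.inr ⟨rfl, h⟩⟩⟩
    choose U hU using hU
    have hsub : (factorEdges g (fP F)).filter (fun e => pairDiff g e = d) ⊆
        (Finset.univ.filter (fun x => F x ≠ x ∧ pairDiff g s(F x, x) = d)).image
          (fun x => s(F x, x)) := by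
      intro e he
      rw [Finset.mem_filter, mem_edges] at he
      obtain ⟨⟨x, hx, rfl⟩, hd⟩ := he
      exact Finset.mem_image.2 ⟨x, by simp [hx, hd], rfl⟩
    refine (Finset.card_le_card hsub).trans (Finset.card_image_le.trans ?_)
    refine le_trans (Finset.card_le_card_of_injOn (t := {d, g - d}) U ?_ ?_) Finset.card_le_two
    · intro x hx
      simp only [Finset.coe_filter, Finset.mem_univ, true_and, Set.mem_setOf_eq] at hx
      obtain ⟨D, j, a, hsp, hD0, hDg, h⟩ := hU x hx.1
      have h2 := hx.2
      unfold pairDiff at h2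
      rw [hsp] at h2
      simp only [Finset.coe_insert, Finset.coe_singleton, Set.mem_insert_iff,
        Set.mem_singleton_iff]
      rcases h with ⟨h, -⟩ | ⟨h, -⟩ <;> omega
    · intro x hx y hy hxy
      simp only [Finset.coe_filter, Finset.mem_univ, true_and, Set.mem_setOf_eq] at hx hy
      obtain ⟨D, j, a, hsp, hD0, hDg, h⟩ := hU x hx.1
      obtain ⟨D', j', a', hsp', hD0', hDg', h'⟩ := hU y hy.1
      apply Fin.ext
      rcases h with ⟨h, k⟩ | ⟨h, k⟩ <;> rcases h' with ⟨h', k'⟩ | ⟨h', k'⟩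
      · have : D = D' := by omega
        subst this
        exact Lo_inj _ _ _ _ _ _ _ _ _ _ _ k k'
      · have := LoHi _ _ _ _ _ _ _ _ _ _ _ _ _ hM hg hδ k k'
        omega
      · have := LoHi _ _ _ _ _ _ _ _ _ _ _ _ _ hM hg hδ k' k
        omega
      · have : D = D' := by omega
        subst this
        exact Hi_inj _ _ _ _ _ _ _ _ _ _ _ k k'

/-- Lemma 7 (k ≥ 2, even case): for odd `n > 1` and `g = 2nk + 2` with `k ≥ 2`, there
is an almost `n`-star factor on `Z_g` whose little star has `t-1` leaves (no little
star when `t = 0`), such that every difference `d ∈ {1, …, nk}` is realized at least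
once by a forward edge and at most twice overall. -/
theorem almost_factor_even_large_k (n : ℕ) (hn : 1 < n) (hodd : Odd n)
    (k : ℕ) (hk : 2 ≤ k) (g : ℕ) (hg : g = 2 * n * k + 2)
    (t : ℕ) (ht1 : t ≤ n) (ht2 : t ≡ g [MOD n + 1]) :
    ∃ P : Finset (Fin g × Finset (Fin g)),
      IsAlmostStarFactor n g t P ∧
      (∀ d, 1 ≤ d → d ≤ n * k →
        ∃ e ∈ factorEdges g P, pairDiff g e = d ∧ IsForwardEdge g e) ∧
      (∀ d, 1 ≤ d → d ≤ n * k →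
        ((factorEdges g P).filter (fun e => pairDiff g e = d)).card ≤ 2) := by
  obtain ⟨q, hq⟩ := hodd
  have hgk : g = 2 * (n * k) + 2 := by rw [hg]; ring
  have hnk : n * 2 ≤ n * k := Nat.mul_le_mul_left n hk
  have hge : g = (n + 1) * (g / (n + 1)) + t := by
    have h1 := Nat.div_add_mod g (n + 1)
    have h2 : t % (n + 1) = g % (n + 1) := ht2
    rw [Nat.mod_eq_of_lt (by omega)] at h2
    omega
  obtain ⟨w, hw⟩ : ∃ w, w = g / (n + 1) := ⟨_, rfl⟩
  rw [← hw] at hge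
  have hteven : t % 2 = 0 := by
    have e : (n + 1) * w = 2 * ((q + 1) * w) := by rw [hq]; ring
    omega
  have hw3 : 3 ≤ w := by
    by_contra hc
    have : (n + 1) * w ≤ (n + 1) * 2 := Nat.mul_le_mul_left _ (by omega)
    omega
  obtain ⟨s, δ, hs, hδ, hsg, ht⟩ : ∃ s δ, 4 ≤ s ∧ δ + 1 ≤ n ∧ g + δ = s * (n + 1) ∧
      (t = 0 ∧ δ = 0 ∨ t ≠ 0 ∧ t - 1 = n - δ) := by
    by_cases h0 : t = 0
    · refine ⟨w, 0, ?_, by omega, by rw [hge, h0]; ring, Or.inl ⟨h0, rfl⟩⟩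
      by_contra hc
      have : w = 3 := by omega
      subst this
      omega
    · refine ⟨w + 1, n + 1 - t, by omega, by omega, ?_, Or.inr ⟨h0, by omega⟩⟩
      have : (w + 1) * (n + 1) = (n + 1) * w + (n + 1) := by ring
      omega
  obtain ⟨P, ⟨h1, h2, L, hL, hL1, hL2⟩, h3, h4⟩ := core n (s / 2) (s - s / 2) δ g (by omega)
    (by omega) (by omega) (by rw [hsg]; congr 1; omega) hδ
  refine ⟨P, ⟨h1, h2, ?_⟩, fun d hd hd2 => h3 d hd (by omega), fun d hd hd2 => h4 d hd (by omega)⟩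
  rcases ht with ⟨ht, hd⟩ | ⟨ht, hd⟩
  · rw [if_pos ht]
    intro p hp
    by_cases h : p = L
    · rw [h, hL1, hd]; rfl
    · exact hL2 p hp h
  · rw [if_neg ht]
    exact ⟨L, hL, by rw [hL1, hd], hL2⟩
end
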